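/- arXiv:1502.06888 — 12 statements merged into one kernel-verified Lean document; each statement's English description precedes it below -/
import Mathlib

section
/- For all integers n ≥ k ≥ 3, there exists a family of exactly ⌈log₂((n-1)/(k-2))⌉ orientations of the edges of the complete graph K_n on vertex set {0,1,...,n-1} that is increasingly k-cycling; that is, t(n,k) ≤ ⌈log₂((n-1)/(k-2))⌉. -/
/-!
Orient a pair `i < j` according to its gap: with `m = k - 2`, the `s`-th orientation sends `i` to
`j` exactly when the `s`-th binary digit of `⌊(j - i - 1) / m⌋` is `0`.

For `u_1 < ⋯ < u_k`, let `b_1, …, b_{k-1}` be these quotients for the consecutive gaps and `B` the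
quotient for the total gap `u_k - u_1`. Since there are `m + 1` consecutive gaps, `B ≥ ∑ b_i + 1`.
The cycle is oriented cyclically by the `s`-th orientation as soon as digit `s` is `0` in every
`b_i` and `1` in `B`. Such a digit exists (`exists_bit`): in the binary computation of
`∑ b_i + (B - ∑ b_i) = B` there is a positive carry into the lowest digit, and a positive carry
stays positive through every digit that is not of the required kind. As
`n - 1 ≤ m * 2 ^ t` gives `B < 2 ^ t`, the carry must vanish within `t` digits, so a digit of the
required kind occurs among them.
-/

/-- The cyclic successor of an index in `Fin k`. -/
def cyc {k : ℕ} (i : Fin k) : Fin k := ⟨(i.val + 1) % k, Nat.mod_lt _ i.pos⟩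

/-- An orientation of the edges of the complete graph on `Fin n`:
for all distinct `i, j` exactly one of `O i j`, `O j i` holds. -/
def IsTournament {n : ℕ} (O : Fin n → Fin n → Prop) : Prop :=
  ∀ i j : Fin n, i ≠ j → Xor' (O i j) (O j i)

/-- `O` orients the cycle `u 0, u 1, ..., u (k-1), u 0` cyclically. -/
def OrientsCyclically {n k : ℕ} (O : Fin n → Fin n → Prop) (u : Fin k → Fin n) : Prop :=
  ∀ i : Fin k, O (u i) (u (cyc i))

/-- A family of orientations of `K_n` is increasingly `k`-cycling if for every
`u_1 < u_2 < ⋯ < u_k` some member orients the cycle `u_1 u_2 ⋯ u_k u_1` cyclically. -/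
def IncCycling (n k t : ℕ) (F : Fin t → (Fin n → Fin n → Prop)) : Prop :=
  (∀ s, IsTournament (F s)) ∧
    ∀ u : Fin k → Fin n, StrictMono u → ∃ s, OrientsCyclically (F s) u

/-- If `B < 2 ^ t` strictly exceeds a sum of natural numbers, then some binary digit below `t` is
`0` in every summand and `1` in `B`. -/
lemma exists_bit (t : ℕ) : ∀ (K : ℕ) (b : ℕ → ℕ) (B : ℕ),
    ∑ i ∈ Finset.range K, b i < B → B < 2 ^ t →
    ∃ s < t, (∀ i < K, (b i).testBit s = false) ∧ B.testBit s = true := by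
  induction t with
  | zero => intro K b B h1 h2; simp at h2; omega
  | succ t ih =>
    intro K b B h1 h2
    by_cases h0 : (∀ i < K, b i % 2 = 0) ∧ B % 2 = 1
    · refine ⟨0, by omega, fun i hi => ?_, ?_⟩
      · simp [Nat.testBit_zero, h0.1 i hi]
      · simp [Nat.testBit_zero, h0.2]
    -- Otherwise the carry into the next digit, `B / 2 - ∑ b i / 2`, is again positive.
    · have hsum : ∑ i ∈ Finset.range K, b i
          = 2 * ∑ i ∈ Finset.range K, b i / 2 + ∑ i ∈ Finset.range K, b i % 2 := by
        rw [Finset.mul_sum, ← Finset.sum_add_distrib]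
        exact Finset.sum_congr rfl fun i _ => by omega
      have hlt : ∑ i ∈ Finset.range K, b i / 2 < B / 2 := by
        by_cases he : ∀ i < K, b i % 2 = 0
        · have : B % 2 ≠ 1 := fun h => h0 ⟨he, h⟩
          omega
        · push Not at he
          obtain ⟨i, hi, hbi⟩ := he
          have := Finset.single_le_sum (f := fun i => b i % 2) (fun _ _ => Nat.zero_le _)
            (Finset.mem_range.2 hi)
          omega
      obtain ⟨s, hs, h3, h4⟩ := ih K (fun i => b i / 2) (B / 2) hlt (by rw [pow_succ] at h2; omega)
      refine ⟨s + 1, by omega, fun i hi => ?_, ?_⟩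
      · rw [Nat.testBit_succ]; exact h3 i hi
      · rw [Nat.testBit_succ]; exact h4

/-- The `s`-th orientation: an increasing pair is oriented upwards iff the `s`-th binary digit of
`(gap - 1) / m` is `0`, and downwards otherwise. -/
def gapOrientation (n m s : ℕ) (i j : Fin n) : Prop :=
  (i < j ∧ ((j.val - i.val - 1) / m).testBit s = false) ∨
    (j < i ∧ ((i.val - j.val - 1) / m).testBit s = true)

lemma gapOrientation_isTournament (n m s : ℕ) : IsTournament (gapOrientation n m s) := by
  intro i j hij
  unfold gapOrientation
  rcases lt_or_gt_of_ne hij with h | h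
  · cases hb : ((j.val - i.val - 1) / m).testBit s <;> simp [Xor', h, h.not_gt, hb]
  · cases hb : ((i.val - j.val - 1) / m).testBit s <;> simp [Xor', h, h.not_gt, hb]

/-- The combinatorial core, for the number of orientations written without logarithms. -/
lemma incCycling_gapOrientation (n k t : ℕ) (hk : 3 ≤ k) (ht : n - 1 ≤ (k - 2) * 2 ^ t) :
    IncCycling n k t (fun s => gapOrientation n (k - 2) s) := by
  refine ⟨fun s => gapOrientation_isTournament n _ _, fun u hu => ?_⟩
  obtain ⟨m, rfl⟩ : ∃ m, k = m + 2 := ⟨k - 2, by omega⟩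
  have hm : 0 < m := by omega
  simp only [Nat.add_sub_cancel] at ht ⊢
  -- `v` is `u` extended to all of `ℕ`; the value outside the range plays no role.
  set v : ℕ → ℕ := fun i => if h : i < m + 2 then (u ⟨i, h⟩).val else 0 with hv
  have hvu : ∀ i : Fin (m + 2), (u i).val = v i.val := fun i => by simp [hv]
  have hstep : ∀ i < m + 1, v i < v (i + 1) := by
    intro i hi
    have := hu (show (⟨i, by omega⟩ : Fin (m + 2)) < ⟨i + 1, by omega⟩ by simp)
    rw [Fin.lt_def, hvu, hvu] at this
    exact this
  have htel : ∀ r ≤ m + 1,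
      v 0 + r + m * ∑ i ∈ Finset.range r, (v (i + 1) - v i - 1) / m ≤ v r := by
    intro r
    induction r with
    | zero => simp
    | succ r ih =>
      intro hr
      have h1 := ih (by omega)
      have h2 := hstep r (by omega)
      have h3 := Nat.mul_div_le (v (r + 1) - v r - 1) m
      rw [Finset.sum_range_succ, mul_add]
      omega
  have hlast := htel (m + 1) le_rfl
  have hvn : v (m + 1) < n := by
    rw [← hvu ⟨m + 1, by omega⟩]; exact (u _).isLt
  have hB1 : ∑ i ∈ Finset.range (m + 1), (v (i + 1) - v i - 1) / m
      < (v (m + 1) - v 0 - 1) / m := by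
    rw [← Nat.succ_le_iff, Nat.le_div_iff_mul_le hm, Nat.succ_mul, mul_comm _ m]
    omega
  have hB2 : (v (m + 1) - v 0 - 1) / m < 2 ^ t := by
    rw [Nat.div_lt_iff_lt_mul hm, mul_comm]
    omega
  obtain ⟨s, hs, h1, h2⟩ := exists_bit t _ _ _ hB1 hB2
  refine ⟨⟨s, hs⟩, fun i => ?_⟩
  by_cases hi : i.val < m + 1
  · left
    have hc : (cyc i).val = i.val + 1 := Nat.mod_eq_of_lt (by omega)
    rw [Fin.lt_def, hvu, hvu, hc]
    exact ⟨hstep _ hi, h1 _ hi⟩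
  · right
    have hi' : i.val = m + 1 := by omega
    have hc : (cyc i).val = 0 := by simp [cyc, hi']
    rw [Fin.lt_def, hvu, hvu, hc, hi']
    exact ⟨by omega, h2⟩

/-- For all `n ≥ k ≥ 3` there is an increasingly `k`-cycling family of exactly
`⌈log₂((n-1)/(k-2))⌉` orientations of `K_n`, i.e. `t(n,k) ≤ ⌈log₂((n-1)/(k-2))⌉`. -/
theorem inc_cycling_upper_bound (n k : ℕ) (hk : 3 ≤ k) (hn : k ≤ n) :
    ∃ t : ℕ, (t : ℤ) = ⌈Real.logb 2 (((n : ℝ) - 1) / ((k : ℝ) - 2))⌉ ∧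
      ∃ F : Fin t → (Fin n → Fin n → Prop), IncCycling n k t F := by
  have hk' : (3 : ℝ) ≤ k := by exact_mod_cast hk
  have hn' : (k : ℝ) ≤ n := by exact_mod_cast hn
  have hpos : (0 : ℝ) < (k : ℝ) - 2 := by linarith
  have hone : 1 ≤ ((n : ℝ) - 1) / ((k : ℝ) - 2) := by
    rw [le_div_iff₀ hpos]; linarith
  obtain ⟨t, ht⟩ := Int.eq_ofNat_of_zero_le
    (Int.ceil_nonneg (Real.logb_nonneg (b := 2) (by norm_num) hone))
  refine ⟨t, ht.symm, _, incCycling_gapOrientation n k t hk ?_⟩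
  have h1 : Real.logb 2 (((n : ℝ) - 1) / ((k : ℝ) - 2)) ≤ (t : ℝ) := by
    have := Int.le_ceil (Real.logb 2 (((n : ℝ) - 1) / ((k : ℝ) - 2)))
    rw [ht] at this
    exact_mod_cast this
  rw [Real.logb_le_iff_le_rpow (by norm_num) (by linarith), Real.rpow_natCast,
    div_le_iff₀ hpos] at h1
  have h2 : ((n - 1 : ℕ) : ℝ) ≤ (((k - 2) * 2 ^ t : ℕ) : ℝ) := by
    push_cast [Nat.cast_sub (show 1 ≤ n by omega), Nat.cast_sub (show 2 ≤ k by omega)]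
    linarith
  exact_mod_cast h2
end

section
/- For all integers n ≥ k ≥ 3, every weakly k-cycling family of orientations of the edges of the complete graph K_n contains at least ⌈log₂((n-1)/(k-2))⌉ orientations; that is, w(n,k) ≥ ⌈log₂((n-1)/(k-2))⌉. -/
/-- A family of orientations of `K_n` is weakly `k`-cycling if for every `k`-element
subset of the vertex set some member orients some ordering of that subset cyclically. -/
def WeakCycling (n k t : ℕ) (F : Fin t → (Fin n → Fin n → Prop)) : Prop :=
  (∀ s, IsTournament (F s)) ∧
    ∀ w : Finset (Fin n), w.card = k →
      ∃ s, ∃ v : Fin k → Fin n, Function.Injective v ∧ (∀ i, v i ∈ w) ∧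
        OrientsCyclically (F s) v

lemma cyc_ne {k : ℕ} (hk : 2 ≤ k) (i : Fin k) : cyc i ≠ i := by
  intro h
  have h1 : (i.val + 1) % k = i.val := congrArg Fin.val h
  have := i.isLt
  rcases Nat.lt_or_ge (i.val + 1) k with h2 | h2
  · rw [Nat.mod_eq_of_lt h2] at h1
    omega
  · have h3 : i.val + 1 = k := by omega
    rw [h3, Nat.mod_self] at h1
    omega

lemma cyc_surjective {k : ℕ} (i : Fin k) : ∃ j : Fin k, cyc j = i := by
  have hi := i.isLt
  rcases Nat.eq_zero_or_pos i.val with h | h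
  · refine ⟨⟨k - 1, by omega⟩, Fin.ext ?_⟩
    have : k - 1 + 1 = k := by omega
    simp [cyc, this, h]
  · refine ⟨⟨i.val - 1, by omega⟩, Fin.ext ?_⟩
    have : i.val - 1 + 1 = i.val := by omega
    simp [cyc, this, Nat.mod_eq_of_lt hi]

/-- The pigeonhole argument on the edges at one vertex. -/
lemma card_le_of_weakCycling (n k t : ℕ) (hk : 3 ≤ k) (hn : k ≤ n)
    (F : Fin t → (Fin n → Fin n → Prop)) (hF : WeakCycling n k t F) :
    n - 1 ≤ 2 ^ t * (k - 2) := by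
  classical
  by_contra! hlt
  obtain ⟨hT, hC⟩ := hF
  let x : Fin n := ⟨0, by omega⟩
  obtain ⟨c, -, hc⟩ := Finset.exists_lt_card_fiber_of_mul_lt_card_of_maps_to
    (s := Finset.univ.erase x) (t := (Finset.univ : Finset (Fin t → Bool)))
    (f := fun u s => decide (F s x u)) (n := k - 2) (fun _ _ => Finset.mem_univ _)
    (by simpa using hlt)
  replace hc := Nat.succ_le_of_lt hc
  obtain ⟨A, hA, hAk⟩ := Finset.exists_subset_card_eq hc
  have hAx : x ∉ A := fun h => by simpa using hA h
  have hAc : ∀ u ∈ A, ∀ s, decide (F s x u) = c s := fun u hu s =>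
    congrFun (Finset.mem_filter.1 (hA hu)).2 s
  have hw : (insert x A).card = k := by
    rw [Finset.card_insert_of_notMem hAx]
    omega
  obtain ⟨s, v, hv, hvw, hcyc⟩ := hC _ hw
  have himg : Finset.univ.image v = insert x A := by
    refine Finset.eq_of_subset_of_card_le (by simpa [Finset.image_subset_iff] using hvw) ?_
    rw [Finset.card_image_of_injective _ hv, hw]
    simp
  obtain ⟨i, -, hi⟩ := Finset.mem_image.1 (himg ▸ Finset.mem_insert_self x A)
  have hmem : ∀ j, j ≠ i → v j ∈ A := fun j hj =>
    (Finset.mem_insert.1 (hvw j)).resolve_left fun h => hj (hv (h.trans hi.symm))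
  -- `v (cyc i)` follows `x` on the cycle and `v j` precedes it.
  obtain ⟨j, hj⟩ := cyc_surjective i
  have hji : j ≠ i := fun h => cyc_ne (by omega) j (hj.trans h.symm)
  have hout : F s x (v (cyc i)) := hi ▸ hcyc i
  have hin : F s (v j) x := by simpa [hj, hi] using hcyc j
  have hjA := hmem j hji
  have hsame : F s x (v j) := by
    have h := (hAc _ hjA s).trans (hAc _ (hmem _ (cyc_ne (by omega) i)) s).symm
    simpa [hout] using h
  have hne : x ≠ v j := fun h => hAx (h ▸ hjA)
  rcases hT s x (v j) hne with h | h
  · exact h.2 hin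
  · exact h.2 hsame

/-- For all `n ≥ k ≥ 3`, every weakly `k`-cycling family of orientations of `K_n`
has at least `⌈log₂((n-1)/(k-2))⌉` members, i.e. `w(n,k) ≥ ⌈log₂((n-1)/(k-2))⌉`. -/
theorem weak_cycling_lower_bound (n k t : ℕ) (hk : 3 ≤ k) (hn : k ≤ n)
    (F : Fin t → (Fin n → Fin n → Prop)) (hF : WeakCycling n k t F) :
    ⌈Real.logb 2 (((n : ℝ) - 1) / ((k : ℝ) - 2))⌉ ≤ (t : ℤ) := by
  have h := card_le_of_weakCycling n k t hk hn F hF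
  have hR : (n : ℝ) - 1 ≤ 2 ^ t * ((k : ℝ) - 2) := by
    have h' : ((n - 1 : ℕ) : ℝ) ≤ ((2 ^ t * (k - 2) : ℕ) : ℝ) := by exact_mod_cast h
    rw [Nat.cast_mul, Nat.cast_sub (by omega), Nat.cast_sub (by omega)] at h'
    simpa using h'
  have hk' : (3 : ℝ) ≤ k := by exact_mod_cast hk
  have hn' : (k : ℝ) ≤ n := by exact_mod_cast hn
  have hpos : 0 < ((n : ℝ) - 1) / ((k : ℝ) - 2) := div_pos (by linarith) (by linarith)
  rw [Int.ceil_le, Real.logb_le_iff_le_rpow (by norm_num) hpos, div_le_iff₀ (by linarith)]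
  simpa using hR
end

section
/- For all integers n ≥ k ≥ 3, the minimum number of orientations of the edges of K_n forming an increasingly k-cycling family equals ⌈log₂((n-1)/(k-2))⌉; that is, t(n,k) = ⌈log₂((n-1)/(k-2))⌉. -/
/-- `t(n,k)`, the minimum size of an increasingly `k`-cycling family of orientations of `K_n`. -/
noncomputable def tnk (n k : ℕ) : ℕ :=
  sInf {t : ℕ | ∃ F : Fin t → (Fin n → Fin n → Prop), IncCycling n k t F}

theorem le_of_incCycling {n k t : ℕ} (hk : 3 ≤ k) (hn : k ≤ n)
    {F : Fin t → Fin n → Fin n → Prop} (hF : IncCycling n k t F) :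
    n - 1 ≤ (k - 2) * 2 ^ t := by
  classical
  obtain ⟨m, rfl⟩ : ∃ m, k = m + 2 + 1 := ⟨k - 3, by omega⟩
  obtain ⟨n, rfl⟩ : ∃ n', n = n' + 1 := ⟨n - 1, by omega⟩
  by_contra! hlt
  obtain ⟨hT, hC⟩ := hF
  let c : Fin n → Finset (Fin t) := fun b => Finset.univ.filter fun s => F s 0 b.succ
  obtain ⟨y, -, hy⟩ := Finset.exists_lt_card_fiber_of_mul_lt_card_of_maps_to
    (s := (Finset.univ : Finset (Fin n))) (t := (Finset.univ : Finset (Finset (Fin t))))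
    (f := c) (n := m + 1) (fun _ _ => Finset.mem_univ _) (by
      simp only [Finset.card_univ, Fintype.card_finset, Fintype.card_fin]
      rw [mul_comm]
      simpa using hlt)
  let e := Finset.orderEmbOfCardLe _ (show m + 2 ≤ _ from hy)
  have he : ∀ i, c (e i) = y := fun i =>
    (Finset.mem_filter.1 (Finset.orderEmbOfCardLe_mem _ (show m + 2 ≤ _ from hy) i)).2
  let u : Fin (m + 2 + 1) → Fin (n + 1) := Fin.cons 0 fun i => (e i).succ
  have hu : StrictMono u := by
    intro a b hab
    induction b using Fin.cases with
    | zero => exact absurd hab (Fin.not_lt_zero a)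
    | succ b =>
      induction a using Fin.cases with
      | zero => simp [u]
      | succ a =>
        have : a < b := by simpa using hab
        simpa [u] using this
  obtain ⟨s, hs⟩ := hC u hu
  have h0 : F s 0 (e 0).succ := by
    have h := hs 0
    have h1 : cyc (0 : Fin (m + 2 + 1)) = Fin.succ 0 := by
      ext
      simp [cyc]
    rw [h1] at h
    exact h
  have hl : F s (e (Fin.last _)).succ 0 := by
    have h := hs (Fin.succ (Fin.last _))
    have h1 : cyc (Fin.succ (Fin.last (m + 1))) = 0 := by
      ext
      simp [cyc]
    rw [h1] at h
    exact h
  have h2 : s ∈ c (e (Fin.last _)) := by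
    rw [he, ← he 0]
    simpa [c] using h0
  have h3 : F s 0 (e (Fin.last _)).succ := by simpa [c] using h2
  have := hT s 0 (e (Fin.last _)).succ (Fin.succ_ne_zero _).symm
  rcases this with h | h
  · exact h.2 hl
  · exact h.2 h3

theorem or_le_add (a b : ℕ) : a ||| b ≤ a + b := by
  induction a using Nat.strong_induction_on generalizing b with
  | _ a ih =>
    rcases Nat.eq_zero_or_pos a with rfl | ha
    · simp
    · have h1 := ih (a / 2) (by omega) (b / 2)
      rw [← Nat.or_div_two] at h1
      have h2 := Nat.or_mod_two_eq_one (a := a) (b := b)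
      omega

/-- The gaps of an increasing sequence `v 0 < ⋯ < v K` are large enough to pay for the bitwise
disjunction `q` of the numbers `⌊(v (i + 1) - v i - 1) / m⌋`: each gap exceeds `m` times its
number. -/
theorem exists_or_bound (m : ℕ) (v : ℕ → ℕ) (K : ℕ) (hv : ∀ i < K, v i < v (i + 1)) :
    ∃ q, v 0 + m * q + K ≤ v K ∧
      ∀ i < K, ∀ s, ((v (i + 1) - v i - 1) / m).testBit s → q.testBit s := by
  induction K with
  | zero => exact ⟨0, by simp⟩
  | succ K ih =>
    obtain ⟨q, hq, hb⟩ := ih fun i hi => hv i (by omega)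
    refine ⟨q ||| (v (K + 1) - v K - 1) / m, ?_, ?_⟩
    · have h1 := hv K (by omega)
      have h2 := Nat.mul_div_le (v (K + 1) - v K - 1) m
      have h3 := Nat.mul_le_mul_left m (or_le_add q ((v (K + 1) - v K - 1) / m))
      rw [mul_add] at h3
      omega
    · intro i hi s hs
      rw [Nat.testBit_or, Bool.or_eq_true]
      rcases Nat.lt_succ_iff_lt_or_eq.1 hi with h | rfl
      · exact Or.inl (hb i h s hs)
      · exact Or.inr hs

/-- The orientation which directs `i < j` forward iff bit `s` of `⌊(j - i - 1) / m⌋` is `0`. -/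
def bitOrientation (n m s : ℕ) (i j : Fin n) : Prop :=
  (i < j ∧ ((j.val - i.val - 1) / m).testBit s = false) ∨
    (j < i ∧ ((i.val - j.val - 1) / m).testBit s = true)

theorem isTournament_bitOrientation (n m s : ℕ) : IsTournament (bitOrientation n m s) := by
  intro i j hij
  rcases lt_or_gt_of_ne hij with h | h
  · cases hb : ((j.val - i.val - 1) / m).testBit s
    · exact Or.inl (by simp [bitOrientation, h, h.not_gt, hb])
    · exact Or.inr (by simp [bitOrientation, h, h.not_gt, hb])
  · cases hb : ((i.val - j.val - 1) / m).testBit s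
    · exact Or.inr (by simp [bitOrientation, h, h.not_gt, hb])
    · exact Or.inl (by simp [bitOrientation, h, h.not_gt, hb])

theorem exists_incCycling {n k t : ℕ} (hk : 3 ≤ k) (h : n - 1 ≤ (k - 2) * 2 ^ t) :
    ∃ F : Fin t → Fin n → Fin n → Prop, IncCycling n k t F := by
  refine ⟨fun s => bitOrientation n (k - 2) s, fun s => isTournament_bitOrientation _ _ _, ?_⟩
  intro u hu
  obtain ⟨m, rfl⟩ : ∃ m, k = m + 2 := ⟨k - 2, by omega⟩
  simp only [Nat.add_sub_cancel] at h ⊢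
  have hm : 0 < m := by omega
  let v : ℕ → ℕ := fun i => if hi : i < m + 2 then (u ⟨i, hi⟩).val else 0
  have hvu : ∀ i (hi : i < m + 2), v i = (u ⟨i, hi⟩).val := fun i hi => dif_pos hi
  have hv : ∀ i < m + 1, v i < v (i + 1) := by
    intro i hi
    rw [hvu i (by omega), hvu (i + 1) (by omega)]
    exact hu (by simp [Fin.lt_def])
  obtain ⟨q, hq, hb⟩ := exists_or_bound m v (m + 1) hv
  set P := (v (m + 1) - v 0 - 1) / m with hP
  have hqP : q < P := by
    rw [← Nat.succ_le_iff, hP, Nat.le_div_iff_mul_le hm, Nat.succ_mul, mul_comm]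
    omega
  have hPt : P < 2 ^ t := by
    rw [hP, Nat.div_lt_iff_lt_mul hm, mul_comm]
    have := (u ⟨m + 1, by omega⟩).isLt
    rw [← hvu] at this
    omega
  -- Otherwise every bit of `P` is a bit of `q`, which forces `P ≤ q`.
  obtain ⟨s, hsP, hsq⟩ : ∃ s, P.testBit s = true ∧ q.testBit s = false := by
    by_contra! hcon
    have : P &&& q = P := by
      apply Nat.eq_of_testBit_eq
      intro s
      rw [Nat.testBit_and]
      have := hcon s
      cases hs : P.testBit s <;> simp_all
    have h2 : P &&& q ≤ q := Nat.and_le_right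
    omega
  have hst : s < t := by
    by_contra! hts
    rw [Nat.testBit_lt_two_pow (hPt.trans_le (Nat.pow_le_pow_right two_pos hts))] at hsP
    exact Bool.noConfusion hsP
  refine ⟨⟨s, hst⟩, ?_⟩
  rintro ⟨i, hi⟩
  rcases Nat.lt_or_ge i (m + 1) with him | him
  · have hc : cyc (⟨i, hi⟩ : Fin (m + 2)) = ⟨i + 1, by omega⟩ := by
      ext
      exact Nat.mod_eq_of_lt (show i + 1 < m + 2 by omega)
    rw [hc]
    refine Or.inl ⟨hu (by simp [Fin.lt_def]), ?_⟩
    rw [← hvu, ← hvu]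
    by_contra hne
    have := hb i him s (by simpa using hne)
    simp [this] at hsq
  · obtain rfl : i = m + 1 := by omega
    have hc : cyc (⟨m + 1, hi⟩ : Fin (m + 2)) = ⟨0, by omega⟩ := by
      ext
      exact Nat.mod_self _
    rw [hc]
    refine Or.inr ⟨hu (by simp [Fin.lt_def]), ?_⟩
    rw [← hvu, ← hvu]
    exact hsP

/-- For all `n ≥ k ≥ 3`, `t(n,k) = ⌈log₂((n-1)/(k-2))⌉`. -/
theorem tnk_eq (n k : ℕ) (hk : 3 ≤ k) (hn : k ≤ n) :
    (tnk n k : ℤ) = ⌈Real.logb 2 (((n : ℝ) - 1) / ((k : ℝ) - 2))⌉ := by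
  have hset : {t : ℕ | ∃ F : Fin t → (Fin n → Fin n → Prop), IncCycling n k t F} =
      {t : ℕ | n - 1 ≤ (k - 2) * 2 ^ t} := by
    ext t
    exact ⟨fun ⟨_, hF⟩ => le_of_incCycling hk hn hF, exists_incCycling hk⟩
  have hk0 : (0 : ℝ) < (k : ℝ) - 2 := by
    have : (3 : ℝ) ≤ k := by exact_mod_cast hk
    linarith
  have hnk : (k : ℝ) ≤ n := by exact_mod_cast hn
  have hx1 : 1 ≤ ((n : ℝ) - 1) / ((k : ℝ) - 2) := by
    rw [le_div_iff₀ hk0]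
    linarith
  set x := ((n : ℝ) - 1) / ((k : ℝ) - 2) with hx
  have key : ∀ t : ℕ, n - 1 ≤ (k - 2) * 2 ^ t ↔ ⌈Real.logb 2 x⌉ ≤ (t : ℤ) := by
    intro t
    rw [Int.ceil_le, Int.cast_natCast, Real.logb_le_iff_le_rpow one_lt_two (by linarith),
      Real.rpow_natCast, hx, div_le_iff₀ hk0, ← Nat.cast_le (α := ℝ)]
    push_cast [Nat.cast_sub (show 1 ≤ n by omega), Nat.cast_sub (show 2 ≤ k by omega)]
    rw [mul_comm]
  have hpos : 0 ≤ ⌈Real.logb 2 x⌉ := Int.ceil_nonneg (Real.logb_nonneg one_lt_two hx1)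
  obtain ⟨c, hc⟩ := Int.eq_ofNat_of_zero_le hpos
  have hleast : IsLeast {t : ℕ | n - 1 ≤ (k - 2) * 2 ^ t} c := by
    refine ⟨(key c).2 hc.le, fun t ht => ?_⟩
    have := (key t).1 ht
    omega
  rw [tnk, hset, hleast.csInf_eq, hc]
end

section
/- Let k ≥ 3 and r ≥ 1 be integers, let n = 2^r(k-2) + 1, and for distinct a, b ∈ {0,1,...,n-1} define d(a,b) = b - a - 1 if b > a and d(a,b) = n + b - a - 1 if a > b, and f(a,b) = ⌊d(a,b)/(k-2)⌋. Then for all distinct a, b ∈ {0,1,...,n-1}, f(a,b) + f(b,a) = 2^r - 1; in particular, for every position ℓ with 0 ≤ ℓ < r, exactly one of f(a,b) and f(b,a) has ℓ-th binary digit equal to 0. -/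
/-!
The two arcs between `a` and `b` contain `n - 2` vertices altogether, so
`d(a,b) + d(b,a) + 1 = 2^r (k-2)`. Replacing `x` by `N m - (x + 1)` reverses the `N` blocks of
length `m` in `{0, …, N m - 1}`, so the two block indices `f(a,b)` and `f(b,a)` add up to `2^r - 1`.
Subtraction from `2^r - 1` complements all `r` binary digits, which gives the digit claim.
-/

/-- The number of vertices strictly between `a` and `b` in clockwise direction on the
cycle `0, 1, …, n-1, 0`: `d(a,b) = b - a - 1` if `a < b` and `d(a,b) = n + b - a - 1`
if `a > b`. -/
def cycDist (n : ℕ) (a b : Fin n) : ℕ :=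
  if (a : ℕ) < (b : ℕ) then (b : ℕ) - (a : ℕ) - 1 else n + (b : ℕ) - (a : ℕ) - 1

/-- `f(a,b) = ⌊d(a,b)/(k-2)⌋` (natural-number division is floor division). -/
def fval (n k : ℕ) (a b : Fin n) : ℕ := cycDist n a b / (k - 2)

theorem cycDist_add_cycDist (n : ℕ) (a b : Fin n) (hab : a ≠ b) :
    cycDist n a b + cycDist n b a + 2 = n := by
  have hne : (a : ℕ) ≠ b := fun h => hab (Fin.ext h)
  unfold cycDist
  split_ifs <;> omega

/-- Let `k ≥ 3`, `r ≥ 1` and `n = 2^r (k-2) + 1`. Then for all distinct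
`a, b ∈ {0, …, n-1}` we have `f(a,b) + f(b,a) = 2^r - 1`; in particular for every
`ℓ < r` exactly one of `f(a,b)` and `f(b,a)` has `ℓ`-th binary digit `0`. -/
theorem fval_add_fval (k r n : ℕ) (hk : 3 ≤ k) (hr : 1 ≤ r)
    (hn : n = 2 ^ r * (k - 2) + 1) (a b : Fin n) (hab : a ≠ b) :
    fval n k a b + fval n k b a = 2 ^ r - 1 ∧
      ∀ ℓ : ℕ, ℓ < r →
        Xor' (Nat.testBit (fval n k a b) ℓ = false)
             (Nat.testBit (fval n k b a) ℓ = false) := by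
  have hd := cycDist_add_cycDist n a b hab
  have hlt : cycDist n a b < (k - 2) * 2 ^ r := by rw [mul_comm]; omega
  have hba : cycDist n b a = (k - 2) * 2 ^ r - (cycDist n a b + 1) := by
    rw [mul_comm]; omega
  have hf : fval n k a b < 2 ^ r := Nat.div_lt_of_lt_mul hlt
  have hg : fval n k b a = 2 ^ r - (fval n k a b + 1) := by
    unfold fval
    rw [hba, Nat.mul_sub_div _ _ _ hlt]
  refine ⟨by omega, fun ℓ hℓ => ?_⟩
  rw [hg, Nat.testBit_two_pow_sub_succ hf]
  cases Nat.testBit (fval n k a b) ℓ <;> simp [hℓ, Xor']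
end

section
/- For all integers r ≥ 3 and n ≥ r, t_r(n) ≥ ⌈log₂(n - r + 2)⌉; that is, any family of rounds such that every r-element subset of {1,...,n} has a round on which its facets are consistently oriented contains at least ⌈log₂(n - r + 2)⌉ rounds. -/
/-!
Let `C` consist of the first `r - 2` vertices. To each of the remaining `n - r + 2` vertices `v`
attach the vector of signs `G s (C ∪ {v})`, one for each round `s`. For two remaining vertices
`v < w`, the facets `C ∪ {w}` and `C ∪ {v}` of `S = C ∪ {v, w}` omit the two largest vertices
of `S`, whose positions are consecutive. A round that is consistent on `S` therefore gives these
facets opposite signs (`ConsistentOn.sign_ne`), so distinct vertices have distinct sign vectors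
and `n - r + 2 ≤ 2 ^ t`.
-/

/-- A round on the vertex set `Fin n`: a function assigning a sign `+1` or `-1`
(an orientation relative to the increasing ordering) to every `(r-1)`-element subset. -/
def IsRound (n r : ℕ) (g : Finset (Fin n) → ℤ) : Prop :=
  ∀ F : Finset (Fin n), F.card = r - 1 → g F = 1 ∨ g F = -1

/-- The round `g` orients the facets of the `r`-element set `S` (with increasing
enumeration `a 0 < a 1 < ⋯ < a (r-1)`) consistently: for some `ε ∈ {+1,-1}`,
`g (S \ {a i}) = ε * (-1) ^ i` for all `i`. -/
def ConsistentOn (n r : ℕ) (g : Finset (Fin n) → ℤ) (S : Finset (Fin n)) : Prop :=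
  ∃ a : Fin r → Fin n, StrictMono a ∧ (∀ i, a i ∈ S) ∧
    ∃ ε : ℤ, (ε = 1 ∨ ε = -1) ∧ ∀ i : Fin r, g (S.erase (a i)) = ε * (-1) ^ (i : ℕ)

/-- The first `k` vertices of `Fin n`. -/
def initialVertices (n k : ℕ) : Finset (Fin n) := Finset.univ.filter fun i => i.val < k

lemma mem_initialVertices {n k : ℕ} {x : Fin n} : x ∈ initialVertices n k ↔ x.val < k := by
  simp [initialVertices]

lemma card_initialVertices {n k : ℕ} (h : k ≤ n) : (initialVertices n k).card = k := by
  simp [initialVertices, Fin.card_filter_val_lt, h]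

lemma StrictMono.val_le_val_apply {r n : ℕ} {a : Fin r → Fin n} (ha : StrictMono a) :
    ∀ (k : ℕ) (hk : k < r), k ≤ (a ⟨k, hk⟩).val := by
  intro k
  induction k with
  | zero => intro _; exact Nat.zero_le _
  | succ k ih =>
    intro hk
    have h1 := ih (by omega)
    have h2 : a ⟨k, by omega⟩ < a ⟨k + 1, hk⟩ := ha (by simp)
    have h3 : (a ⟨k, by omega⟩).val < (a ⟨k + 1, hk⟩).val := h2
    omega

/-- A round consistent on `C ∪ {v, w}`, with `C` the first `k` vertices and `v < w` not in `C`,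
separates the facets `C ∪ {v}` and `C ∪ {w}`: exactly one of them receives the sign `1`. -/
lemma ConsistentOn.sign_ne {n k : ℕ} {g : Finset (Fin n) → ℤ} {v w : Fin n}
    (hv : k ≤ v.val) (hvw : v < w)
    (h : ConsistentOn n (k + 2) g (insert v (insert w (initialVertices n k)))) :
    ¬ (g (insert v (initialVertices n k)) = 1 ↔ g (insert w (initialVertices n k)) = 1) := by
  obtain ⟨a, ha, hmem, ε, hε, hg⟩ := h
  have hvw' : v.val < w.val := hvw
  have hw : k ≤ w.val := by omega
  have key : ∀ x ∈ insert v (insert w (initialVertices n k)), k ≤ x.val → x = v ∨ x = w := by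
    intro x hx hkx
    simp only [Finset.mem_insert, mem_initialVertices] at hx
    rcases hx with hx | hx | hx
    · exact .inl hx
    · exact .inr hx
    · omega
  have hlt : a ⟨k, by omega⟩ < a ⟨k + 1, by omega⟩ := ha (by simp)
  have h0 := key _ (hmem ⟨k, by omega⟩) (ha.val_le_val_apply k _)
  have h1 := key _ (hmem ⟨k + 1, by omega⟩)
    (le_trans (Nat.le_succ k) (ha.val_le_val_apply (k + 1) _))
  -- The last two entries of the increasing enumeration lie outside `C`, so they are `v` and `w`.
  have hav : a ⟨k, by omega⟩ = v ∧ a ⟨k + 1, by omega⟩ = w := by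
    rcases h0 with h0 | h0 <;> rcases h1 with h1 | h1 <;> rw [h0, h1] at hlt
    · exact absurd hlt (lt_irrefl _)
    · exact ⟨h0, h1⟩
    · exact absurd hlt (lt_asymm hvw)
    · exact absurd hlt (lt_irrefl _)
  have hvC : v ∉ insert w (initialVertices n k) := by
    simp only [Finset.mem_insert, mem_initialVertices, not_or]
    exact ⟨hvw.ne, by omega⟩
  have hwC : w ∉ insert v (initialVertices n k) := by
    simp only [Finset.mem_insert, mem_initialVertices, not_or]
    exact ⟨hvw.ne', by omega⟩
  have e0 := hg ⟨k, by omega⟩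
  have e1 := hg ⟨k + 1, by omega⟩
  rw [hav.1, Finset.erase_insert hvC] at e0
  rw [hav.2, Finset.insert_comm, Finset.erase_insert hwC] at e1
  rw [e0, e1]
  rcases hε with rfl | rfl <;> rcases neg_one_pow_eq_or ℤ k with hk | hk <;>
    simp [pow_succ, hk]

/-- For `r ≥ 3` and `n ≥ r`: any family of rounds such that every `r`-element subset
of the `n`-element vertex set has a round orienting its facets consistently contains
at least `⌈log₂(n - r + 2)⌉` rounds, i.e. `t_r(n) ≥ ⌈log₂(n - r + 2)⌉`. -/
theorem rounds_lower_bound (r n t : ℕ) (hr : 3 ≤ r) (hn : r ≤ n)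
    (G : Fin t → (Finset (Fin n) → ℤ)) (hG : ∀ s, IsRound n r (G s))
    (hcov : ∀ S : Finset (Fin n), S.card = r → ∃ s, ConsistentOn n r (G s) S) :
    ⌈Real.logb 2 ((n : ℝ) - (r : ℝ) + 2)⌉ ≤ (t : ℤ) := by
  obtain ⟨k, rfl⟩ : ∃ k, r = k + 2 := ⟨r - 2, by omega⟩
  have sep : ∀ v w : Fin n, k ≤ v.val → v < w →
      ∃ s, ¬ (G s (insert v (initialVertices n k)) = 1 ↔
        G s (insert w (initialVertices n k)) = 1) := by
    intro v w hv hvw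
    have hvw' : v.val < w.val := hvw
    obtain ⟨s, hs⟩ := hcov (insert v (insert w (initialVertices n k))) (by
      rw [Finset.card_insert_of_notMem, Finset.card_insert_of_notMem,
        card_initialVertices (by omega)]
      · rw [mem_initialVertices]; omega
      · simp only [Finset.mem_insert, mem_initialVertices, not_or]
        exact ⟨hvw.ne, by omega⟩)
    exact ⟨s, hs.sign_ne hv hvw⟩
  let f : Fin (n - k) → (Fin t → Bool) := fun v s =>
    decide (G s (insert ⟨k + v.val, by omega⟩ (initialVertices n k)) = 1)
  have hf : Function.Injective f := by
    refine Function.Injective.of_lt_imp_ne fun v w hvw hfe => ?_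
    obtain ⟨s, hs⟩ := sep ⟨k + v.val, by omega⟩ ⟨k + w.val, by omega⟩ (by simp)
      (by simpa using hvw)
    exact hs (decide_eq_decide.mp (congrFun hfe s))
  have hcard : n - k ≤ 2 ^ t := by
    simpa using Fintype.card_le_of_injective f hf
  have hreal : (n : ℝ) - ((k + 2 : ℕ) : ℝ) + 2 = ((n - k : ℕ) : ℝ) := by
    rw [Nat.cast_sub (by omega)]; push_cast; ring
  have hpos : 0 < n - k := by omega
  rw [hreal, Int.ceil_le, Int.cast_natCast,
    Real.logb_le_iff_le_rpow (by norm_num) (by exact_mod_cast hpos), Real.rpow_natCast]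
  exact_mod_cast hcard
end

section
/- Let r ≥ 3, n ≥ r and t ≥ 1 be integers. If 4·((2^(r-1) - 1)/2^(r-1))^t · r·(n - r) ≤ 1, then there exist t rounds on {1,...,n} such that every r-element subset of {1,...,n} has at least one round on which its facets are consistently oriented; in particular t_r(n) ≤ t. -/
/-! ### The local lemma -/

open Classical in
/-- The set of outcomes avoiding all events `A i`, `i ∈ T`. -/
noncomputable def avoiding {Ω ι : Type*} [Fintype Ω] (A : ι → Finset Ω) (T : Finset ι) :
    Finset Ω :=
  Finset.univ.filter fun ω => ∀ i ∈ T, ω ∉ A i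

open Classical in
theorem card_avoiding_insert {Ω ι : Type*} [Fintype Ω] [DecidableEq Ω]
    (A : ι → Finset Ω) (T : Finset ι) (i : ι) :
    ((avoiding A (insert i T)).card : ℝ) + ((A i ∩ avoiding A T).card : ℝ)
      = (avoiding A T).card := by
  have h : avoiding A (insert i T) = avoiding A T \ (A i ∩ avoiding A T) := by
    ext ω
    simp only [avoiding, Finset.mem_filter, Finset.mem_univ, true_and, Finset.mem_insert,
      forall_eq_or_imp, Finset.mem_sdiff, Finset.mem_inter]
    tauto
  rw [h]
  exact_mod_cast Finset.card_sdiff_add_card_eq_card Finset.inter_subset_right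

open Classical in
/-- The union bound, relative to the outcomes avoiding `T`. -/
theorem card_avoiding_union {Ω ι : Type*} [Fintype Ω] [DecidableEq Ω]
    (A : ι → Finset Ω) (T R : Finset ι) :
    ((avoiding A T).card : ℝ)
      ≤ (avoiding A (R ∪ T)).card + ∑ i ∈ R, ((A i ∩ avoiding A T).card : ℝ) := by
  induction R using Finset.induction_on with
  | empty => simp
  | insert i R hi ih =>
    rw [Finset.sum_insert hi, Finset.insert_union]
    have h1 := card_avoiding_insert A (R ∪ T) i
    have h2 : ((A i ∩ avoiding A (R ∪ T)).card : ℝ) ≤ (A i ∩ avoiding A T).card := by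
      gcongr
      intro ω
      simp only [avoiding, Finset.mem_filter, Finset.mem_univ, true_and]
      exact fun h j hj => h j (Finset.mem_union_right _ hj)
    linarith

open Classical in
/-- The inductive core of the local lemma: conditioned on avoiding any other events, each event
has probability at most `2 p`. Independence enters as the inequality `hind`, which is all that
the argument uses. -/
theorem card_inter_avoiding_le {Ω ι : Type*} [Fintype Ω] [DecidableEq Ω]
    (A : ι → Finset Ω) (Γ : ι → Finset ι)
    (U : Finset ι) (p : ℝ) (d : ℕ) (hp : 0 ≤ p) (hpd : 4 * p * d ≤ 1)
    (hΓ : ∀ i ∈ U, (Γ i).card ≤ d)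
    (hind : ∀ i ∈ U, ∀ T ⊆ U, i ∉ T → Disjoint T (Γ i) →
      ((A i ∩ avoiding A T).card : ℝ) ≤ p * (avoiding A T).card)
    (m : ℕ) : ∀ T ⊆ U, T.card = m → ∀ i ∈ U, i ∉ T →
      ((A i ∩ avoiding A T).card : ℝ) ≤ 2 * p * (avoiding A T).card := by
  induction m using Nat.strong_induction_on with
  | _ m ih =>
    intro T hT hm i hi hiT
    -- `R` holds the events of `T` near `A i`; those of `T \ R` are independent of `A i`.
    set R := T ∩ Γ i with hR
    have hRT : R ∪ (T \ R) = T := Finset.union_sdiff_of_subset Finset.inter_subset_left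
    have hsub : T \ R ⊆ U := Finset.sdiff_subset.trans hT
    have h1 : ((A i ∩ avoiding A T).card : ℝ) ≤ (A i ∩ avoiding A (T \ R)).card := by
      gcongr
      intro ω
      simp only [avoiding, Finset.mem_filter, Finset.mem_univ, true_and]
      exact fun h j hj => h j (Finset.sdiff_subset hj)
    have h2 := hind i hi (T \ R) hsub (fun h => hiT (Finset.sdiff_subset h)) (by
      rw [Finset.disjoint_left]
      intro j hj hj'
      simp only [hR, Finset.mem_sdiff, Finset.mem_inter] at hj
      tauto)
    have h3 := card_avoiding_union A (T \ R) R
    rw [hRT] at h3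
    have hN : (0 : ℝ) ≤ (avoiding A (T \ R)).card := by positivity
    have h4 : ∑ j ∈ R, ((A j ∩ avoiding A (T \ R)).card : ℝ)
        ≤ (d : ℝ) * (2 * p * (avoiding A (T \ R)).card) := by
      have h5 : ∑ j ∈ R, ((A j ∩ avoiding A (T \ R)).card : ℝ)
          ≤ R.card • (2 * p * (avoiding A (T \ R)).card) := by
        apply Finset.sum_le_card_nsmul
        intro j hj
        have hjT : j ∈ T := Finset.inter_subset_left hj
        refine ih (T \ R).card ?_ (T \ R) hsub rfl j (hT hjT) (by simp [hj])
        rw [← hm]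
        exact Finset.card_lt_card ⟨Finset.sdiff_subset, fun h => by simpa [hj] using h hjT⟩
      rw [nsmul_eq_mul] at h5
      refine h5.trans ?_
      have : R.card ≤ d := (Finset.card_le_card Finset.inter_subset_right).trans (hΓ i hi)
      gcongr
    have h6 : (d : ℝ) * (2 * p * (avoiding A (T \ R)).card) ≤ (avoiding A (T \ R)).card / 2 := by
      nlinarith
    have h7 : ((avoiding A (T \ R)).card : ℝ) ≤ 2 * (avoiding A T).card := by linarith
    nlinarith

open Classical in
/-- The symmetric Lovász local lemma for the uniform measure on a finite set. -/
theorem exists_avoiding {Ω ι : Type*} [Fintype Ω] [DecidableEq Ω] [Nonempty Ω]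
    (A : ι → Finset Ω) (Γ : ι → Finset ι) (U : Finset ι) (p : ℝ) (d : ℕ)
    (hp : 0 ≤ p) (hpd : 4 * p * d ≤ 1) (hp1 : 2 * p < 1)
    (hΓ : ∀ i ∈ U, (Γ i).card ≤ d)
    (hind : ∀ i ∈ U, ∀ T ⊆ U, i ∉ T → Disjoint T (Γ i) →
      ((A i ∩ avoiding A T).card : ℝ) ≤ p * (avoiding A T).card) :
    ∃ ω, ∀ i ∈ U, ω ∉ A i := by
  have key : ∀ T ⊆ U, (0 : ℝ) < (avoiding A T).card := by
    intro T
    induction T using Finset.induction_on with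
    | empty =>
      intro _
      simp [avoiding, Fintype.card_pos]
    | insert i T hi ih =>
      intro hT
      rw [Finset.insert_subset_iff] at hT
      have h1 := ih hT.2
      have h2 := card_inter_avoiding_le A Γ U p d hp hpd hΓ hind _ T hT.2 rfl i hT.1 hi
      have h3 := card_avoiding_insert A T i
      nlinarith
  have h := key U subset_rfl
  rw [Nat.cast_pos, Finset.card_pos] at h
  obtain ⟨ω, hω⟩ := h
  exact ⟨ω, by simpa [avoiding] using hω⟩

/-! ### Independence in a product space -/

open Classical in
/-- An event `P` on the coordinates in `K` is independent of an event `Q` insensitive to them. -/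
theorem card_and_le {κ V : Type*} [Fintype κ] [DecidableEq κ] [Fintype V] [Nonempty V]
    (K : Finset κ) (P : ({k // k ∈ K} → V) → Prop) (Q : (κ → V) → Prop)
    (hQ : ∀ ω ω' : κ → V, (∀ k, k ∉ K → ω k = ω' k) → Q ω → Q ω') (p : ℝ)
    (hP : ((Finset.univ.filter P).card : ℝ) ≤ p * Fintype.card ({k // k ∈ K} → V)) :
    ((Finset.univ.filter fun ω : κ → V => P (fun k => ω k) ∧ Q ω).card : ℝ)
      ≤ p * (Finset.univ.filter Q).card := by
  obtain ⟨v⟩ := ‹Nonempty V›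
  let e := Equiv.piEquivPiSubtypeProd (fun k => k ∈ K) (fun _ => V)
  let Q' : ({k // k ∉ K} → V) → Prop := fun y => Q (e.symm (fun _ => v, y))
  have hQ' : ∀ ω, Q ω ↔ Q' (e ω).2 := by
    intro ω
    constructor <;> refine hQ _ _ ?_ <;> intro k hk <;> simp [e, hk]
  have h1 : (Finset.univ.filter fun ω : κ → V => P (fun k => ω k) ∧ Q ω).card
      = ((Finset.univ.filter P) ×ˢ (Finset.univ.filter Q')).card := by
    refine Finset.card_equiv e fun ω => ?_
    simp only [Finset.mem_filter, Finset.mem_univ, true_and, Finset.mem_product, hQ']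
    rfl
  have h2 : (Finset.univ.filter Q).card
      = ((Finset.univ : Finset ({k // k ∈ K} → V)) ×ˢ (Finset.univ.filter Q')).card := by
    refine Finset.card_equiv e fun ω => ?_
    simp only [Finset.mem_filter, Finset.mem_univ, true_and, Finset.mem_product, hQ']
  rw [h1, h2, Finset.card_product, Finset.card_product, Finset.card_univ]
  rw [Nat.cast_mul, Nat.cast_mul, ← mul_assoc]
  exact mul_le_mul_of_nonneg_right hP (Nat.cast_nonneg _)

/-! ### Bad events -/

/-- The facets of the simplex on `S`. -/
def facets {n : ℕ} (S : Finset (Fin n)) : Finset (Finset (Fin n)) :=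
  S.image fun x => S.erase x

theorem card_facets {n : ℕ} (S : Finset (Fin n)) : (facets S).card = S.card :=
  Finset.card_image_of_injOn S.erase_injOn

/-- In each of the `t` rounds, the sign pattern given by `f` differs from the pattern `c` and
from its negation. Here `κ` stands for the set of facets of an `r`-set and `c` for a consistent
pattern on it. -/
def BadPattern {κ : Type*} {t : ℕ} (c : κ → Bool) (f : κ → Fin t → Bool) : Prop :=
  ∀ s, (fun k => f k s) ≠ c ∧ (fun k => f k s) ≠ fun k => !(c k)

open Classical in
/-- The probability that all `t` rounds miss both consistent patterns on `r ≥ 1` facets. -/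
theorem card_bad {κ : Type*} [Fintype κ] [DecidableEq κ] {t r : ℕ} (c : κ → Bool)
    (hκ : Fintype.card κ = r) (hr : 1 ≤ r) :
    ((Finset.univ.filter fun f : κ → Fin t → Bool => BadPattern c f).card : ℝ)
      = (((2 : ℝ) ^ (r - 1) - 1) / (2 : ℝ) ^ (r - 1)) ^ t * Fintype.card (κ → Fin t → Bool) := by
  have hne : c ≠ fun k => !(c k) := by
    intro h
    have : Nonempty κ := Fintype.card_pos_iff.1 (by omega)
    have := congrFun h (Classical.arbitrary κ)
    simp at this
  have h1 : (Finset.univ.filter fun f : κ → Fin t → Bool => BadPattern c f).card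
      = (Fintype.piFinset fun _ : Fin t => ({c, fun k => !(c k)} : Finset (κ → Bool))ᶜ).card := by
    refine Finset.card_equiv (Equiv.piComm _) fun f => ?_
    simp only [Finset.mem_filter, Finset.mem_univ, true_and, Fintype.mem_piFinset,
      Finset.mem_compl, Finset.mem_insert, Finset.mem_singleton, not_or]
    rfl
  obtain ⟨q, rfl⟩ : ∃ q, r = q + 1 := ⟨r - 1, by omega⟩
  have h2 : (({c, fun k => !(c k)} : Finset (κ → Bool))ᶜ.card : ℝ) = 2 * (2 ^ q - 1) := by
    rw [Finset.card_compl, Finset.card_pair hne, Fintype.card_fun, hκ, Fintype.card_bool,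
      Nat.cast_sub (by have := Nat.one_le_two_pow (n := q); rw [pow_succ]; omega)]
    push_cast
    ring
  rw [h1, Fintype.card_piFinset_const, Nat.cast_pow, h2, Fintype.card_fun, hκ, Fintype.card_fun,
    Fintype.card_bool, Fintype.card_fin, Nat.add_sub_cancel]
  push_cast
  rw [← pow_mul, mul_comm t, pow_mul, ← mul_pow]
  congr 1
  field_simp
  ring

/-- A sign as an integer. -/
def boolSign (b : Bool) : ℤ := if b then 1 else -1

/-- The alternating pattern on the facets of an `r`-set (`true` for removal of an element of even
index); its value on other sets is irrelevant. -/
noncomputable def altPattern {n r : ℕ} (S : Finset (Fin n)) (hS : S.card = r)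
    (F : Finset (Fin n)) : Bool :=
  Function.extend (fun i : Fin r => S.erase (S.orderEmbOfFin hS i))
    (fun i => decide (Even (i : ℕ))) (fun _ => false) F

theorem altPattern_erase {n r : ℕ} (S : Finset (Fin n)) (hS : S.card = r) (i : Fin r) :
    altPattern S hS (S.erase (S.orderEmbOfFin hS i)) = decide (Even (i : ℕ)) := by
  unfold altPattern
  refine Function.Injective.extend_apply (f := fun i : Fin r => S.erase (S.orderEmbOfFin hS i))
    ?_ _ _ i
  intro i j hij
  exact (S.orderEmbOfFin hS).injective
    (S.erase_injOn (S.orderEmbOfFin_mem hS i) (S.orderEmbOfFin_mem hS j) hij)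

theorem consistent_of_not_bad {n r t : ℕ} (S : Finset (Fin n)) (hS : S.card = r)
    (ω : Finset (Fin n) → Fin t → Bool)
    (h : ¬ BadPattern (fun k : {k // k ∈ facets S} => altPattern S hS k) (fun k => ω k)) :
    ∃ s, ConsistentOn n r (fun F => boolSign (ω F s)) S := by
  unfold BadPattern at h
  push Not at h
  obtain ⟨s, hs⟩ := h
  refine ⟨s, S.orderEmbOfFin hS, (S.orderEmbOfFin hS).strictMono, S.orderEmbOfFin_mem hS, ?_⟩
  have hmem : ∀ i, S.erase (S.orderEmbOfFin hS i) ∈ facets S := fun i =>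
    Finset.mem_image_of_mem _ (S.orderEmbOfFin_mem hS i)
  by_cases hc : (fun k : {k // k ∈ facets S} => ω k.1 s) =
      fun k : {k // k ∈ facets S} => altPattern S hS k.1
  · refine ⟨1, Or.inl rfl, fun i => ?_⟩
    have := congrFun hc ⟨_, hmem i⟩
    simp only [altPattern_erase] at this
    rcases Nat.even_or_odd (i : ℕ) with hi | hi
    · simp [this, boolSign, hi]
    · simp [this, boolSign, hi, Nat.not_even_iff_odd.2 hi]
  · refine ⟨-1, Or.inr rfl, fun i => ?_⟩
    have := congrFun (hs hc) ⟨_, hmem i⟩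
    simp only [altPattern_erase] at this
    rcases Nat.even_or_odd (i : ℕ) with hi | hi
    · simp [this, boolSign, hi]
    · simp [this, boolSign, hi, Nat.not_even_iff_odd.2 hi]

/-- The sets arising from `S` by swapping one element of `S` with one outside `S`. -/
def neighbours {n : ℕ} (S : Finset (Fin n)) : Finset (Finset (Fin n)) :=
  (S ×ˢ Sᶜ).image fun q => insert q.2 (S.erase q.1)

theorem card_neighbours {n : ℕ} (S : Finset (Fin n)) :
    (neighbours S).card ≤ S.card * (n - S.card) := by
  refine Finset.card_image_le.trans ?_
  rw [Finset.card_product, Finset.card_compl, Fintype.card_fin]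

theorem mem_neighbours {n : ℕ} (S S' : Finset (Fin n)) (hne : S ≠ S') (hc : S'.card = S.card)
    (h : ¬ Disjoint (facets S') (facets S)) : S' ∈ neighbours S := by
  rw [Finset.not_disjoint_iff] at h
  obtain ⟨F, h1, h2⟩ := h
  simp only [facets, Finset.mem_image] at h1 h2
  obtain ⟨x, hx, rfl⟩ := h1
  obtain ⟨y, hy, hxy⟩ := h2
  have hS' : insert x (S.erase y) = S' := by rw [hxy, Finset.insert_erase hx]
  refine Finset.mem_image.2 ⟨(y, x), ?_, hS'⟩
  rw [Finset.mem_product, Finset.mem_compl]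
  refine ⟨hy, fun hxS => hne (Finset.eq_of_subset_of_card_le ?_ hc.ge).symm⟩
  rw [← hS']
  exact Finset.insert_subset hxS (Finset.erase_subset _ _)

open Classical in
/-- The event that `S` is consistently oriented in none of the rounds (empty if `S` is not an
`r`-set). -/
noncomputable def badEvent (n r t : ℕ) (S : Finset (Fin n)) :
    Finset (Finset (Fin n) → Fin t → Bool) :=
  Finset.univ.filter fun ω => ∃ hS : S.card = r,
    BadPattern (fun k : {k // k ∈ facets S} => altPattern S hS k) (fun k => ω k)

open Classical in
theorem card_badEvent_inter {n r t : ℕ} (hr : 1 ≤ r) (S : Finset (Fin n)) (hS : S.card = r)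
    (T : Finset (Finset (Fin n))) (hT : ∀ S' ∈ T, Disjoint (facets S') (facets S)) :
    ((badEvent n r t S ∩ avoiding (badEvent n r t) T).card : ℝ)
      ≤ (((2 : ℝ) ^ (r - 1) - 1) / (2 : ℝ) ^ (r - 1)) ^ t
        * (avoiding (badEvent n r t) T).card := by
  have h := card_and_le (V := Fin t → Bool) (facets S)
    (fun f => BadPattern (fun k : {k // k ∈ facets S} => altPattern S hS k) f)
    (fun ω => ∀ S' ∈ T, ω ∉ badEvent n r t S') ?_ _
    (card_bad _ (by rw [Fintype.card_coe, card_facets, hS]) hr).le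
  · have he : badEvent n r t S ∩ avoiding (badEvent n r t) T = Finset.univ.filter fun ω =>
        BadPattern (fun k : {k // k ∈ facets S} => altPattern S hS k) (fun k => ω k) ∧
          ∀ S' ∈ T, ω ∉ badEvent n r t S' := by
      ext ω
      simp only [badEvent, avoiding, Finset.mem_inter, Finset.mem_filter, Finset.mem_univ,
        true_and, hS, exists_true_left]
    rw [he]
    unfold avoiding
    convert h
  · intro ω ω' hω hQ S' hmemT hb
    refine hQ S' hmemT ?_
    simp only [badEvent, Finset.mem_filter, Finset.mem_univ, true_and] at hb ⊢
    obtain ⟨h1, h2⟩ := hb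
    refine ⟨h1, ?_⟩
    convert h2 using 2 with k
    exact hω _ (Finset.disjoint_left.1 (hT S' hmemT) k.2)

/-- Some outcome avoids all bad events. -/
theorem exists_good (r n t : ℕ) (hr : 3 ≤ r) (hn : r ≤ n) (ht : 1 ≤ t)
    (hLLL : 4 * (((2 : ℝ) ^ (r - 1) - 1) / (2 : ℝ) ^ (r - 1)) ^ t *
        ((r : ℝ) * ((n : ℝ) - (r : ℝ))) ≤ 1) :
    ∃ ω : Finset (Fin n) → Fin t → Bool,
      ∀ S ∈ Finset.powersetCard r Finset.univ, ω ∉ badEvent n r t S := by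
  classical
  have hpow : (1 : ℝ) ≤ 2 ^ (r - 1) := one_le_pow₀ (by norm_num)
  have hb0 : 0 ≤ ((2 : ℝ) ^ (r - 1) - 1) / (2 : ℝ) ^ (r - 1) :=
    div_nonneg (by linarith) (by positivity)
  have hb1 : ((2 : ℝ) ^ (r - 1) - 1) / (2 : ℝ) ^ (r - 1) < 1 := by
    rw [div_lt_one (by positivity)]
    linarith
  rcases hn.eq_or_lt with rfl | hlt
  -- The only `r`-set is the whole vertex set, whose bad event has probability `< 1`.
  · have h := card_badEvent_inter (t := t) (show 1 ≤ r by omega)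
      (Finset.univ : Finset (Fin r)) (by simp) ∅ (by simp)
    have hN : avoiding (badEvent r r t) ∅ = Finset.univ := by simp [avoiding]
    have hp1 : (((2 : ℝ) ^ (r - 1) - 1) / (2 : ℝ) ^ (r - 1)) ^ t < 1 :=
      pow_lt_one₀ hb0 hb1 (by omega)
    rw [hN, Finset.inter_univ] at h
    have hpos : (0 : ℝ) < (Finset.univ : Finset (Finset (Fin r) → Fin t → Bool)).card := by
      rw [Nat.cast_pos]
      exact Finset.card_pos.2 Finset.univ_nonempty
    by_contra! hcon
    have hall : badEvent r r t Finset.univ = Finset.univ := by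
      refine Finset.eq_univ_iff_forall.2 fun ω => ?_
      obtain ⟨S, hS, hω⟩ := hcon ω
      rw [Finset.mem_powersetCard] at hS
      have : S = Finset.univ := (Finset.card_eq_iff_eq_univ S).1 (by simpa using hS.2)
      rwa [this] at hω
    rw [hall] at h
    nlinarith
  · have hd : (1 : ℝ) ≤ ((r * (n - r) : ℕ) : ℝ) := by
      exact_mod_cast Nat.mul_pos (show 0 < r by omega) (show 0 < n - r by omega)
    have hd' : ((r * (n - r) : ℕ) : ℝ) = (r : ℝ) * ((n : ℝ) - (r : ℝ)) := by
      rw [Nat.cast_mul, Nat.cast_sub hn]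
    rw [← hd'] at hLLL
    have hp0 := pow_nonneg hb0 t
    refine exists_avoiding (badEvent n r t) neighbours _ _ (r * (n - r)) hp0 hLLL
      (by nlinarith) ?_ ?_
    · intro S hS
      have := card_neighbours S
      rwa [(Finset.mem_powersetCard.1 hS).2] at this
    · intro S hS T hT hST hdis
      have hS' := (Finset.mem_powersetCard.1 hS).2
      refine card_badEvent_inter (by omega) S hS' T fun S' hmemT => ?_
      by_contra hnd
      refine Finset.disjoint_left.1 hdis hmemT (mem_neighbours S S' ?_ ?_ hnd)
      · rintro rfl
        exact hST hmemT
      · rw [hS', (Finset.mem_powersetCard.1 (hT hmemT)).2]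

/-- Let `r ≥ 3`, `n ≥ r`, `t ≥ 1`. If `4 * ((2^(r-1) - 1)/2^(r-1))^t * r * (n - r) ≤ 1`,
then there exist `t` rounds such that every `r`-element subset has a round orienting its
facets consistently; in particular `t_r(n) ≤ t`. -/
theorem rounds_upper_bound_LLL (r n t : ℕ) (hr : 3 ≤ r) (hn : r ≤ n) (ht : 1 ≤ t)
    (hLLL : 4 * (((2 : ℝ) ^ (r - 1) - 1) / (2 : ℝ) ^ (r - 1)) ^ t *
        ((r : ℝ) * ((n : ℝ) - (r : ℝ))) ≤ 1) :
    (∃ G : Fin t → (Finset (Fin n) → ℤ), (∀ s, IsRound n r (G s)) ∧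
        ∀ S : Finset (Fin n), S.card = r → ∃ s, ConsistentOn n r (G s) S) ∧
      sInf {t' : ℕ | ∃ G : Fin t' → (Finset (Fin n) → ℤ), (∀ s, IsRound n r (G s)) ∧
        ∀ S : Finset (Fin n), S.card = r → ∃ s, ConsistentOn n r (G s) S} ≤ t := by
  have hmain : ∃ G : Fin t → (Finset (Fin n) → ℤ), (∀ s, IsRound n r (G s)) ∧
      ∀ S : Finset (Fin n), S.card = r → ∃ s, ConsistentOn n r (G s) S := by
    obtain ⟨ω, hω⟩ := exists_good r n t hr hn ht hLLL
    refine ⟨fun s F => boolSign (ω F s), fun s F _ => ?_, fun S hS => ?_⟩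
    · cases h : ω F s <;> simp [boolSign, h]
    · refine consistent_of_not_bad S hS ω fun hbad => ?_
      refine hω S (Finset.mem_powersetCard.2 ⟨Finset.subset_univ _, hS⟩) ?_
      simp only [badEvent, Finset.mem_filter, Finset.mem_univ, true_and]
      exact ⟨hS, hbad⟩
  exact ⟨hmain, Nat.sInf_le hmain⟩
end

section
/- For every fixed integer r ≥ 3 there exists a constant C > 0 such that for all sufficiently large n, t_r(n) ≤ C·log₂ n; more precisely, t_r(n) ≤ (log₂(2^(r-1)/(2^(r-1)-1)))^(-1)·log₂(4r(n-r)) for all n > r. -/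
/-- `t_r(n)`: the minimum number of rounds such that every `r`-element subset of the
`n`-element vertex set has at least one round orienting its facets consistently. -/
noncomputable def trn (r n : ℕ) : ℕ :=
  sInf {t : ℕ | ∃ G : Fin t → (Finset (Fin n) → ℤ), (∀ s, IsRound n r (G s)) ∧
    ∀ S : Finset (Fin n), S.card = r → ∃ s, ConsistentOn n r (G s) S}

/-! ### The local lemma -/

section LocalLemma

variable {Ω J : Type*} [Fintype Ω]

open Classical in
/-- The number of outcomes avoiding all the events `A k`, `k ∈ T`. -/
noncomputable def avoidCount (A : J → Ω → Prop) (T : Finset J) : ℝ :=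
  ((Finset.univ.filter fun ω => ∀ k ∈ T, ¬ A k ω).card : ℝ)

open Classical in
/-- The number of outcomes in `A j` avoiding all the events `A k`, `k ∈ T`. -/
noncomputable def hitCount (A : J → Ω → Prop) (j : J) (T : Finset J) : ℝ :=
  ((Finset.univ.filter fun ω => A j ω ∧ ∀ k ∈ T, ¬ A k ω).card : ℝ)

lemma avoidCount_insert [DecidableEq J] (A : J → Ω → Prop) (j : J) (T : Finset J) :
    avoidCount A (insert j T) = avoidCount A T - hitCount A j T := by
  classical
  unfold avoidCount hitCount
  rw [eq_sub_iff_add_eq, ← Nat.cast_add, ← Finset.card_union_of_disjoint]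
  · congr 2
    ext ω
    simp only [Finset.mem_union, Finset.mem_filter, Finset.mem_univ, true_and,
      Finset.forall_mem_insert]
    tauto
  · rw [Finset.disjoint_left]
    intro ω h1 h2
    simp only [Finset.mem_filter, Finset.mem_univ, true_and, Finset.forall_mem_insert] at h1 h2
    exact h1.1 h2.1

lemma avoidCount_nonneg (A : J → Ω → Prop) (T : Finset J) : 0 ≤ avoidCount A T :=
  Nat.cast_nonneg _

lemma hitCount_anti (A : J → Ω → Prop) (j : J) {T T' : Finset J} (h : T ⊆ T') :
    hitCount A j T' ≤ hitCount A j T := by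
  classical
  unfold hitCount
  exact_mod_cast Finset.card_le_card fun ω hω => by
    simp only [Finset.mem_filter, Finset.mem_univ, true_and] at hω ⊢
    exact ⟨hω.1, fun k hk => hω.2 k (h hk)⟩

/-- The inductive core of the local lemma: conditionally on avoiding the events in `T`, the
event `A j` has probability at most `x`. -/
lemma hitCount_le (A : J → Ω → Prop) (U : Finset J) (adj : J → J → Prop) (x : ℝ) (d : ℕ)
    (hx0 : 0 ≤ x) (hx1 : x ≤ 1)
    (hind : ∀ j ∈ U, ∀ T ⊆ U, j ∉ T → (∀ k ∈ T, ¬ adj j k) →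
      hitCount A j T ≤ x * (1 - x) ^ d * avoidCount A T)
    (hdeg : ∀ j ∈ U, ∀ T ⊆ U, j ∉ T → (∀ k ∈ T, adj j k) → T.card ≤ d) :
    ∀ m : ℕ, ∀ T ⊆ U, T.card = m → ∀ j ∈ U, j ∉ T →
      hitCount A j T ≤ x * avoidCount A T := by
  classical
  intro m
  induction m using Nat.strong_induction_on with
  | _ m ih =>
    intro T hTU hTm j hjU hjT
    set T₁ := T.filter (fun k => adj j k) with hT₁
    set T₂ := T.filter (fun k => ¬ adj j k) with hT₂
    -- Adding the neighbours of `j` one at a time costs a factor `1 - x` each.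
    have key : ∀ R ⊆ T₁, (1 - x) ^ R.card * avoidCount A T₂ ≤ avoidCount A (R ∪ T₂) := by
      intro R
      induction R using Finset.induction_on with
      | empty => intro _; simp
      | insert k R hk ihR =>
        intro hR
        have hkT₁ : k ∈ T₁ := hR (Finset.mem_insert_self _ _)
        have hRT₁ : R ⊆ T₁ := fun y hy => hR (Finset.mem_insert_of_mem hy)
        have hkT : k ∈ T := (Finset.mem_filter.1 hkT₁).1
        have hkadj : adj j k := (Finset.mem_filter.1 hkT₁).2
        have hsub : R ∪ T₂ ⊆ T :=
          Finset.union_subset (hRT₁.trans (Finset.filter_subset _ _)) (Finset.filter_subset _ _)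
        have hkn : k ∉ R ∪ T₂ := by
          rw [Finset.mem_union, not_or]
          exact ⟨hk, fun h => (Finset.mem_filter.1 h).2 hkadj⟩
        have hlt : (R ∪ T₂).card < m := by
          rw [← hTm]
          exact Finset.card_lt_card ⟨hsub, fun h => hkn (h hkT)⟩
        have h1 := ih _ hlt (R ∪ T₂) (hsub.trans hTU) rfl k (hTU hkT) hkn
        rw [Finset.insert_union, avoidCount_insert, Finset.card_insert_of_notMem hk, pow_succ]
        have h2 := mul_le_mul_of_nonneg_left (ihR hRT₁) (sub_nonneg.2 hx1)
        linarith
    have hunion : T₁ ∪ T₂ = T := Finset.filter_union_filter_not_eq _ _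
    have hk := key T₁ subset_rfl
    rw [hunion] at hk
    have hcard : T₁.card ≤ d :=
      hdeg j hjU T₁ ((Finset.filter_subset _ _).trans hTU)
        (fun h => hjT (Finset.mem_filter.1 h).1) (fun k hk => (Finset.mem_filter.1 hk).2)
    have hpow : (1 - x) ^ d ≤ (1 - x) ^ T₁.card :=
      pow_le_pow_of_le_one (sub_nonneg.2 hx1) (by linarith) hcard
    calc hitCount A j T ≤ hitCount A j T₂ := hitCount_anti A j (Finset.filter_subset _ _)
      _ ≤ x * (1 - x) ^ d * avoidCount A T₂ :=
          hind j hjU T₂ ((Finset.filter_subset _ _).trans hTU)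
            (fun h => hjT (Finset.mem_filter.1 h).1) (fun k hk => (Finset.mem_filter.1 hk).2)
      _ = x * ((1 - x) ^ d * avoidCount A T₂) := by ring
      _ ≤ x * ((1 - x) ^ T₁.card * avoidCount A T₂) := by
          gcongr
          exact avoidCount_nonneg _ _
      _ ≤ x * avoidCount A T := by gcongr

/-- The symmetric Lovász Local Lemma, in a counting form: `hind` bounds the conditional
probability of an event given that non-adjacent events do not occur, and `hdeg` bounds the
number of neighbours of each event. -/
lemma local_lemma [Nonempty Ω] (A : J → Ω → Prop) (U : Finset J) (adj : J → J → Prop) (x : ℝ)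
    (d : ℕ) (hx0 : 0 ≤ x) (hx1 : x < 1)
    (hind : ∀ j ∈ U, ∀ T ⊆ U, j ∉ T → (∀ k ∈ T, ¬ adj j k) →
      hitCount A j T ≤ x * (1 - x) ^ d * avoidCount A T)
    (hdeg : ∀ j ∈ U, ∀ T ⊆ U, j ∉ T → (∀ k ∈ T, adj j k) → T.card ≤ d) :
    ∃ ω, ∀ k ∈ U, ¬ A k ω := by
  classical
  have pos : ∀ T ⊆ U, 0 < avoidCount A T := by
    intro T
    induction T using Finset.induction_on with
    | empty => intro _; simp [avoidCount, Fintype.card_pos]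
    | insert j T hj ihT =>
      intro h
      have hT : T ⊆ U := fun y hy => h (Finset.mem_insert_of_mem hy)
      have h1 := hitCount_le A U adj x d hx0 hx1.le hind hdeg _ T hT rfl j
        (h (Finset.mem_insert_self _ _)) hj
      have h2 := mul_pos (sub_pos.2 hx1) (ihT hT)
      rw [avoidCount_insert]
      linarith
  have h := pos U subset_rfl
  unfold avoidCount at h
  obtain ⟨ω, hω⟩ := Finset.card_pos.1 (Nat.cast_pos.1 h)
  exact ⟨ω, (Finset.mem_filter.1 hω).2⟩

end LocalLemma

/-! ### Counting families of sign functions -/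

section Counting

variable {ι : Type*} [Fintype ι] [DecidableEq ι]

open Classical in
/-- Independence of events determined by disjoint sets of coordinates. Exchanging the coordinates
outside `V` of two outcomes maps `(P ∧ Q) × Ω` injectively into `P × Q`. -/
lemma card_and_mul_le (t : ℕ) (V : ι → Prop) (P Q : (Fin t → ι → Bool) → Prop)
    (hP : ∀ ω ω' : Fin t → ι → Bool, (∀ s i, V i → ω s i = ω' s i) → P ω → P ω')
    (hQ : ∀ ω ω' : Fin t → ι → Bool, (∀ s i, ¬ V i → ω s i = ω' s i) → Q ω → Q ω') :
    (Finset.univ.filter fun ω => P ω ∧ Q ω).card * Fintype.card (Fin t → ι → Bool) ≤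
      (Finset.univ.filter P).card * (Finset.univ.filter Q).card := by
  rw [← Finset.card_univ, ← Finset.card_product, ← Finset.card_product]
  refine Finset.card_le_card_of_injOn
    (fun p => (fun s i => if V i then p.1 s i else p.2 s i,
      fun s i => if V i then p.2 s i else p.1 s i)) ?_ ?_
  · rintro ⟨ω, ω'⟩ h
    simp only [Finset.coe_product, Set.mem_prod, Finset.mem_coe, Finset.mem_filter,
      Finset.mem_univ, true_and, and_true] at h ⊢
    exact ⟨hP ω _ (fun s i hi => by simp [hi]) h.1, hQ ω _ (fun s i hi => by simp [hi]) h.2⟩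
  · rintro ⟨ω, ω'⟩ _ ⟨η, η'⟩ _ h
    simp only [Prod.mk.injEq] at h
    obtain ⟨h1, h2⟩ := h
    have h3 : ∀ s i, ω s i = η s i ∧ ω' s i = η' s i := by
      intro s i
      have h1' := congrFun (congrFun h1 s) i
      have h2' := congrFun (congrFun h2 s) i
      by_cases hi : V i
      · simp only [hi, if_true] at h1' h2'
        exact ⟨h1', h2'⟩
      · simp only [hi, if_false] at h1' h2'
        exact ⟨h2', h1'⟩
    exact Prod.ext (funext fun s => funext fun i => (h3 s i).1)
      (funext fun s => funext fun i => (h3 s i).2)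

/-- The Boolean function `f` alternates along `e`: this encodes consistency of the orientations
of the facets `e 0, e 1, …`, with `true` standing for the sign `-1`. -/
def Alternating {r : ℕ} (e : Fin r → ι) (f : ι → Bool) : Prop :=
  ∃ b : Bool, ∀ i, f (e i) = xor b (decide ((i : ℕ) % 2 = 1))

open Classical in
/-- A uniformly random `f` alternates along `k + 1` distinct points with probability at least
`1 / 2 ^ k`: `f` is determined by its values at `e 1, …, e k` together with the alternating
function obtained by overwriting these values. -/
lemma card_le_alternating (k : ℕ) (e : Fin (k + 1) → ι) (he : Function.Injective e) :
    Fintype.card (ι → Bool) ≤ (Finset.univ.filter (Alternating e)).card * 2 ^ k := by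
  have hc : (Finset.univ : Finset (Fin k → Bool)).card = 2 ^ k := by simp
  rw [← hc, ← Finset.card_univ, ← Finset.card_product]
  refine Finset.card_le_card_of_injOn
    (fun f => (Function.extend e
      (fun i => xor (f (e 0)) (decide ((i : ℕ) % 2 = 1))) f, fun i => f (e i.succ))) ?_ ?_
  · intro f _
    simp only [Finset.coe_product, Set.mem_prod, Finset.mem_coe, Finset.mem_filter,
      Finset.mem_univ, true_and, and_true]
    exact ⟨f (e 0), fun i => he.extend_apply _ _ _⟩
  · intro f _ g _ h
    simp only [Prod.mk.injEq] at h
    obtain ⟨h1, h2⟩ := h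
    funext z
    by_cases hz : ∃ i, e i = z
    · obtain ⟨i, rfl⟩ := hz
      induction i using Fin.cases with
      | zero =>
        have h3 := congrFun h1 (e 0)
        rw [he.extend_apply, he.extend_apply] at h3
        simpa using h3
      | succ i => exact congrFun h2 i
    · have h3 := congrFun h1 z
      rwa [Function.extend_apply' _ _ _ hz, Function.extend_apply' _ _ _ hz] at h3

open Classical in
/-- The probability that none of `t` random functions alternates along `e`. -/
lemma card_bad_le (t k : ℕ) (e : Fin (k + 1) → ι) (he : Function.Injective e) :
    ((Finset.univ.filter fun ω : Fin t → ι → Bool => ∀ s, ¬ Alternating e (ω s)).card : ℝ) ≤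
      (1 - 1 / 2 ^ k) ^ t * (Fintype.card (Fin t → ι → Bool) : ℝ) := by
  have h1 : (Finset.univ.filter fun ω : Fin t → ι → Bool => ∀ s, ¬ Alternating e (ω s)) =
      Fintype.piFinset fun _ : Fin t => Finset.univ.filter fun f => ¬ Alternating e f := by
    ext ω
    simp [Fintype.mem_piFinset]
  have h2 : (Fintype.card (Fin t → ι → Bool) : ℝ) = (Fintype.card (ι → Bool) : ℝ) ^ t := by
    rw [Fintype.card_fun, Fintype.card_fin]
    push_cast
    rfl
  rw [h1, Fintype.card_piFinset, Finset.prod_const, Finset.card_univ, Fintype.card_fin, h2,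
    ← mul_pow]
  push_cast
  refine pow_le_pow_left₀ (Nat.cast_nonneg _) ?_ t
  have h3 : ((Finset.univ.filter (Alternating e)).card : ℝ) +
      ((Finset.univ.filter fun f => ¬ Alternating e f).card : ℝ) =
      (Fintype.card (ι → Bool) : ℝ) := by
    have h := Finset.card_filter_add_card_filter_not
      (s := (Finset.univ : Finset (ι → Bool))) (Alternating e)
    rw [Finset.card_univ] at h
    exact_mod_cast h
  have h4 : (Fintype.card (ι → Bool) : ℝ) ≤
      ((Finset.univ.filter (Alternating e)).card : ℝ) * 2 ^ k := by
    exact_mod_cast card_le_alternating k e he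
  have h5 : (Fintype.card (ι → Bool) : ℝ) / 2 ^ k ≤
      ((Finset.univ.filter (Alternating e)).card : ℝ) := by
    rwa [div_le_iff₀ (by positivity)]
  have h6 : (1 - 1 / 2 ^ k) * (Fintype.card (ι → Bool) : ℝ) =
    (Fintype.card (ι → Bool) : ℝ) - (Fintype.card (ι → Bool) : ℝ) / 2 ^ k := by ring
  rw [h6]
  linarith

end Counting

/-! ### Random rounds -/

section Rounds

variable {n : ℕ}

/-- `S` and `S'` have a common facet. -/
def ShareFacet (S S' : Finset (Fin n)) : Prop :=
  ∃ x ∈ S, ∃ y ∈ S', S.erase x = S'.erase y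

lemma card_shareFacet_le (r : ℕ) (S : Finset (Fin n)) (hS : S.card = r)
    (T : Finset (Finset (Fin n))) (hST : S ∉ T) (hT : ∀ S' ∈ T, ShareFacet S S') :
    T.card ≤ r * (n - r) := by
  classical
  have hsub : T ⊆ (S ×ˢ Sᶜ).image (fun p => insert p.2 (S.erase p.1)) := by
    intro S' hS'
    obtain ⟨x, hx, y, hy, h⟩ := hT S' hS'
    have hS'eq : insert y (S.erase x) = S' := by rw [h, Finset.insert_erase hy]
    have hyS : y ∉ S := by
      intro hyS
      by_cases hxy : y = x
      · subst hxy
        rw [Finset.insert_erase hyS] at hS'eq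
        exact hST (hS'eq ▸ hS')
      · have h' : y ∈ S.erase x := Finset.mem_erase.2 ⟨hxy, hyS⟩
        rw [h] at h'
        exact Finset.notMem_erase _ _ h'
    exact Finset.mem_image.2 ⟨(x, y),
      Finset.mem_product.2 ⟨hx, Finset.mem_compl.2 hyS⟩, hS'eq⟩
  refine (Finset.card_le_card hsub).trans (Finset.card_image_le.trans ?_)
  rw [Finset.card_product, Finset.card_compl, hS, Fintype.card_fin]

/-- The facets of `S`, listed by the increasing order of the omitted vertex (and junk if `S` does
not have `r` elements). -/
def facet (r : ℕ) (S : Finset (Fin n)) (i : Fin r) : Finset (Fin n) :=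
  if h : S.card = r then S.erase (S.orderEmbOfFin h i) else ∅

lemma facet_injective (r : ℕ) (S : Finset (Fin n)) (h : S.card = r) :
    Function.Injective (facet r S) := by
  intro i j hij
  simp only [facet, h, dif_pos] at hij
  exact (S.orderEmbOfFin h).injective
    (Finset.erase_injOn S (S.orderEmbOfFin_mem h i) (S.orderEmbOfFin_mem h j) hij)

/-- A Boolean sign function gives a round, with `true` standing for `-1`; alternation along the
facets is then consistency. -/
lemma consistentOn_of_alternating (r : ℕ) (S : Finset (Fin n)) (h : S.card = r)
    (f : Finset (Fin n) → Bool) (hf : Alternating (facet r S) f) :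
    ConsistentOn n r (fun F => if f F then -1 else 1) S := by
  obtain ⟨b, hb⟩ := hf
  refine ⟨S.orderEmbOfFin h, (S.orderEmbOfFin h).strictMono, S.orderEmbOfFin_mem h,
    if b then -1 else 1, by cases b <;> simp, fun i => ?_⟩
  have hbi := hb i
  simp only [facet, h, dif_pos] at hbi
  simp only [hbi]
  rcases Nat.mod_two_eq_zero_or_one (i : ℕ) with hi | hi
  · have : (-1 : ℤ) ^ (i : ℕ) = 1 := (Nat.even_iff.2 hi).neg_one_pow
    cases b <;> simp [hi, this]
  · have : (-1 : ℤ) ^ (i : ℕ) = -1 := (Nat.odd_iff.2 hi).neg_one_pow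
    cases b <;> simp [hi, this]

/-- The event that none of the `t` sign functions orients the facets of `S` consistently. -/
def Bad (t r : ℕ) (S : Finset (Fin n)) (ω : Fin t → Finset (Fin n) → Bool) : Prop :=
  ∀ s, ¬ Alternating (facet r S) (ω s)

lemma Bad.congr {t r : ℕ} {S : Finset (Fin n)} {ω ω' : Fin t → Finset (Fin n) → Bool}
    (h : ∀ s i, ω s (facet r S i) = ω' s (facet r S i)) (hA : Bad t r S ω) : Bad t r S ω' := by
  rintro s ⟨b, hb⟩
  exact hA s ⟨b, fun i => (h s i).trans (hb i)⟩

/-- Given that none of the sets in `T` is bad, where these share no facet with `S`, the conditional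
probability that `S` is bad is still at most `(1 - 1 / 2 ^ k) ^ t`. -/
lemma hitCount_bad_le (t k : ℕ) (S : Finset (Fin n)) (hS : S.card = k + 1)
    (T : Finset (Finset (Fin n))) (hTcard : ∀ S' ∈ T, S'.card = k + 1)
    (hT : ∀ S' ∈ T, ¬ ShareFacet S S') :
    hitCount (Bad t (k + 1)) S T ≤
      (1 - 1 / 2 ^ k) ^ t * avoidCount (Bad t (k + 1)) T := by
  classical
  have hind := card_and_mul_le t (fun F => ∃ i, facet (k + 1) S i = F) (Bad t (k + 1) S)
    (fun ω => ∀ S' ∈ T, ¬ Bad t (k + 1) S' ω)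
    (fun ω ω' h => Bad.congr fun s i => h s _ ⟨i, rfl⟩)
    (fun ω ω' h hQ S' hS' hA => hQ S' hS' <| Bad.congr (fun s i => by
      refine (h s _ ?_).symm
      rintro ⟨j, hj⟩
      have hS'card := hTcard S' hS'
      simp only [facet, hS, hS'card, dif_pos] at hj
      exact hT S' hS' ⟨_, S.orderEmbOfFin_mem hS j, _, S'.orderEmbOfFin_mem hS'card i, hj⟩) hA)
  have hbad := card_bad_le t k (facet (k + 1) S) (facet_injective _ S hS)
  have hpos : (0 : ℝ) < Fintype.card (Fin t → Finset (Fin n) → Bool) :=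
    Nat.cast_pos.2 Fintype.card_pos
  generalize Fintype.card (Fin t → Finset (Fin n) → Bool) = M at hind hbad hpos
  have hind' : hitCount (Bad t (k + 1)) S T * (M : ℝ) ≤
      ((1 - 1 / 2 ^ k) ^ t * (M : ℝ)) * avoidCount (Bad t (k + 1)) T := by
    refine le_trans ?_ (mul_le_mul_of_nonneg_right hbad (avoidCount_nonneg _ _))
    unfold hitCount avoidCount
    rw [← Nat.cast_mul, ← Nat.cast_mul, Nat.cast_le]
    convert hind
    exact Iff.rfl
  refine le_of_mul_le_mul_right (hind'.trans (le_of_eq ?_)) hpos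
  ring

lemma trn_le_of_condition (k t d : ℕ) (hd : d = (k + 1) * (n - (k + 1))) (hdpos : 0 < d)
    (hcond : (1 - 1 / 2 ^ k : ℝ) ^ t ≤ 1 / ((d : ℝ) + 1) * (1 - 1 / ((d : ℝ) + 1)) ^ d) :
    trn (k + 1) n ≤ t := by
  have hdR : (0 : ℝ) < d := Nat.cast_pos.2 hdpos
  have hx1 : 1 / ((d : ℝ) + 1) < 1 := by
    rw [div_lt_one (by positivity)]
    linarith
  obtain ⟨ω, hω⟩ := local_lemma (Bad t (k + 1))
    ((Finset.univ : Finset (Fin n)).powersetCard (k + 1)) ShareFacet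
    (1 / ((d : ℝ) + 1)) d (by positivity) hx1
    (fun S hS T hTU _ hT =>
      (hitCount_bad_le t k S (Finset.mem_powersetCard.1 hS).2 T
        (fun S' hS' => (Finset.mem_powersetCard.1 (hTU hS')).2) hT).trans
        (mul_le_mul_of_nonneg_right hcond (avoidCount_nonneg _ _)))
    (fun S hS T _ hST hT => hd ▸
      card_shareFacet_le (k + 1) S (Finset.mem_powersetCard.1 hS).2 T hST hT)
  refine Nat.sInf_le ⟨fun s F => if ω s F then -1 else 1, fun s F _ => ?_, fun S hS => ?_⟩
  · by_cases h : ω s F <;> simp [h]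
  · have h := hω S (Finset.mem_powersetCard.2 ⟨Finset.subset_univ _, hS⟩)
    simp only [Bad, not_forall, not_not] at h
    obtain ⟨s, hs⟩ := h
    exact ⟨s, consistentOn_of_alternating _ S hS _ hs⟩

end Rounds

/-! ### Numerical estimates -/

lemma one_sub_pow_lower (d : ℕ) (hd : 0 < d) :
    1 / (2.7183 * ((d : ℝ) + 1)) ≤ 1 / ((d : ℝ) + 1) * (1 - 1 / ((d : ℝ) + 1)) ^ d := by
  have hdR : (0 : ℝ) < d := by exact_mod_cast hd
  have h1 : (1 + 1 / (d : ℝ)) ^ d ≤ 2.7183 := by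
    have h2 : 1 + 1 / (d : ℝ) ≤ Real.exp (1 / d) := by
      linarith [Real.add_one_le_exp (1 / (d : ℝ))]
    calc (1 + 1 / (d : ℝ)) ^ d ≤ Real.exp (1 / d) ^ d := by gcongr
      _ = Real.exp 1 := by rw [← Real.exp_nat_mul]; congr 1; field_simp
      _ ≤ 2.7183 := by linarith [Real.exp_one_lt_d9]
  have h3 : 1 - 1 / ((d : ℝ) + 1) = (1 + 1 / (d : ℝ))⁻¹ := by field_simp; ring
  rw [h3, inv_pow, mul_comm (2.7183 : ℝ), ← one_div_mul_one_div, one_div (2.7183 : ℝ)]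
  gcongr

/-- If `t + 1` exceeds `log (4 d) / log (1 / q)`, with `q = 1 - 1 / 2 ^ k`, then `t` rounds meet
the requirement of the local lemma. -/
lemma numeric_condition (k m t : ℕ) (hk : 2 ≤ k) (hm : 0 < m)
    (ht : (1 - 1 / 2 ^ k : ℝ) ^ (t + 1) * (4 * ((k + 1) * m : ℕ)) < 1) :
    (1 - 1 / 2 ^ k : ℝ) ^ t ≤
      1 / (((k + 1) * m : ℕ) + 1 : ℝ) *
        (1 - 1 / (((k + 1) * m : ℕ) + 1 : ℝ)) ^ ((k + 1) * m) := by
  set d := (k + 1) * m with hd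
  have hdpos : 0 < d := Nat.mul_pos (Nat.succ_pos _) hm
  have hdR : (0 : ℝ) < d := by exact_mod_cast hdpos
  set q : ℝ := 1 - 1 / 2 ^ k with hq
  have general : 0 < q → 2.7183 * ((d : ℝ) + 1) ≤ 4 * d * q →
      q ^ t ≤ 1 / ((d : ℝ) + 1) * (1 - 1 / ((d : ℝ) + 1)) ^ d := by
    intro hq0 h
    refine le_trans ?_ (one_sub_pow_lower d hdpos)
    rw [le_div_iff₀ (by positivity)]
    have h1 : q ^ t * (2.7183 * ((d : ℝ) + 1)) ≤ q ^ t * (4 * d * q) := by gcongr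
    have h2 : q ^ t * (4 * d * q) = q ^ (t + 1) * (4 * d) := by ring
    linarith
  rcases hk.eq_or_lt with hk2 | hk3
  · have hq34 : q = 3 / 4 := by rw [hq, ← hk2]; norm_num
    by_cases hm4 : 4 ≤ m
    · have hd10 : (10 : ℝ) ≤ d := by
        have : 10 ≤ d := by rw [hd, ← hk2]; omega
        exact_mod_cast this
      exact general (by rw [hq34]; norm_num) (by rw [hq34]; linarith)
    · -- For `d = 3, 6, 9` the hypothesis forces `t ≥ 8, 11, 12` respectively.
      have small : ∀ t₀ : ℕ, 1 ≤ (3 / 4 : ℝ) ^ t₀ * (4 * d) → t₀ ≤ t := by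
        intro t₀ h
        by_contra hlt
        have h1 : (3 / 4 : ℝ) ^ t₀ ≤ (3 / 4 : ℝ) ^ (t + 1) :=
          pow_le_pow_of_le_one (by norm_num) (by norm_num) (by omega)
        rw [hq34] at ht
        have h2 := mul_le_mul_of_nonneg_right h1 (by positivity : (0 : ℝ) ≤ 4 * d)
        linarith
      have mono : ∀ t₀ : ℕ, t₀ ≤ t → (3 / 4 : ℝ) ^ t ≤ (3 / 4 : ℝ) ^ t₀ := fun t₀ h =>
        pow_le_pow_of_le_one (by norm_num) (by norm_num) h
      rw [hq34]
      have hm3 : m = 1 ∨ m = 2 ∨ m = 3 := by omega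
      rcases hm3 with h | h | h
      · have hdv : d = 3 := by rw [hd, ← hk2, h]
        refine (mono 8 (small 8 (by rw [hdv]; norm_num))).trans ?_
        rw [hdv]; norm_num
      · have hdv : d = 6 := by rw [hd, ← hk2, h]
        refine (mono 11 (small 11 (by rw [hdv]; norm_num))).trans ?_
        rw [hdv]; norm_num
      · have hdv : d = 9 := by rw [hd, ← hk2, h]
        refine (mono 12 (small 12 (by rw [hdv]; norm_num))).trans ?_
        rw [hdv]; norm_num
  · have hq78 : 7 / 8 ≤ q := by
      have h8 : (8 : ℝ) ≤ 2 ^ k := by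
        calc (8 : ℝ) = 2 ^ 3 := by norm_num
          _ ≤ 2 ^ k := pow_le_pow_right₀ (by norm_num) hk3
      have : (1 : ℝ) / 2 ^ k ≤ 1 / 8 := by gcongr
      rw [hq]; linarith
    have hd4 : (4 : ℝ) ≤ d := by
      have : 4 ≤ d := by rw [hd]; nlinarith
      exact_mod_cast this
    exact general (by linarith) (by nlinarith)

/-- The bound for all `n > r`, with `t` the integer part of the right-hand side. -/
lemma precise_bound (r : ℕ) (hr : 3 ≤ r) (n : ℕ) (hn : r < n) :
    (trn r n : ℝ) ≤ (Real.logb 2 ((2 : ℝ) ^ (r - 1) / ((2 : ℝ) ^ (r - 1) - 1)))⁻¹ *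
      Real.logb 2 (4 * (r : ℝ) * ((n : ℝ) - (r : ℝ))) := by
  obtain ⟨k, rfl⟩ : ∃ k, r = k + 1 := ⟨r - 1, by omega⟩
  have hk : 2 ≤ k := by omega
  simp only [Nat.add_sub_cancel]
  have h4 : (4 : ℝ) ≤ 2 ^ k := by
    calc (4 : ℝ) = 2 ^ 2 := by norm_num
      _ ≤ 2 ^ k := pow_le_pow_right₀ (by norm_num) hk
  set Q : ℝ := 2 ^ k / (2 ^ k - 1) with hQ
  have hQ1 : 1 < Q := by rw [hQ, lt_div_iff₀ (by linarith)]; linarith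
  have hqQ : (1 - 1 / 2 ^ k : ℝ) = Q⁻¹ := by
    have : (2 : ℝ) ^ k - 1 ≠ 0 := by linarith
    rw [hQ, inv_div]; field_simp
  set m := n - (k + 1) with hm
  have hmpos : 0 < m := by omega
  have hD : 4 * ((k + 1 : ℕ) : ℝ) * ((n : ℝ) - ((k + 1 : ℕ) : ℝ)) =
      4 * (((k + 1) * m : ℕ) : ℝ) := by
    rw [hm, Nat.cast_mul, Nat.cast_sub hn.le]; ring
  rw [hD]
  have hdpos : (1 : ℝ) ≤ (((k + 1) * m : ℕ) : ℝ) := by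
    exact_mod_cast Nat.mul_pos (Nat.succ_pos k) hmpos
  set D : ℝ := 4 * (((k + 1) * m : ℕ) : ℝ) with hDdef
  have hlogQ : 0 < Real.logb 2 Q := Real.logb_pos (by norm_num) hQ1
  have hlogD : 0 < Real.logb 2 D := Real.logb_pos (by norm_num) (by linarith)
  set X := (Real.logb 2 Q)⁻¹ * Real.logb 2 D with hX
  have hX0 : 0 ≤ X := by positivity
  have hlt : X < (⌊X⌋₊ : ℝ) + 1 := Nat.lt_floor_add_one X
  have hpow : D < Q ^ (⌊X⌋₊ + 1) := by
    rw [hX, inv_mul_lt_iff₀ hlogQ] at hlt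
    have hQp : 0 < Q ^ (⌊X⌋₊ + 1) := by positivity
    refine (Real.logb_lt_logb_iff (b := 2) (by norm_num) (by linarith) hQp).1 ?_
    rw [Real.logb_pow]
    push_cast
    linarith
  have hcond := numeric_condition k m ⌊X⌋₊ hk hmpos (by
    rw [hqQ, inv_pow, inv_mul_lt_iff₀ (by positivity), mul_one]
    exact hpow)
  have htr : trn (k + 1) n ≤ ⌊X⌋₊ := trn_le_of_condition k ⌊X⌋₊ _ rfl
    (Nat.mul_pos (Nat.succ_pos k) hmpos) hcond
  calc (trn (k + 1) n : ℝ) ≤ (⌊X⌋₊ : ℝ) := by exact_mod_cast htr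
    _ ≤ X := Nat.floor_le hX0

/-- For every fixed `r ≥ 3` there is a constant `C > 0` with `t_r(n) ≤ C log₂ n` for all
sufficiently large `n`; more precisely
`t_r(n) ≤ (log₂(2^(r-1)/(2^(r-1)-1)))⁻¹ * log₂(4r(n-r))` for all `n > r`. -/
theorem rounds_upper_bound (r : ℕ) (hr : 3 ≤ r) :
    (∃ C : ℝ, 0 < C ∧ ∃ N : ℕ, ∀ n : ℕ, N ≤ n → (trn r n : ℝ) ≤ C * Real.logb 2 n) ∧
      ∀ n : ℕ, r < n →
        (trn r n : ℝ) ≤ (Real.logb 2 ((2 : ℝ) ^ (r - 1) / ((2 : ℝ) ^ (r - 1) - 1)))⁻¹ *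
          Real.logb 2 (4 * (r : ℝ) * ((n : ℝ) - (r : ℝ))) := by
  refine ⟨?_, precise_bound r hr⟩
  set K := (Real.logb 2 ((2 : ℝ) ^ (r - 1) / ((2 : ℝ) ^ (r - 1) - 1)))⁻¹ with hK
  have hKpos : 0 < K := by
    have h4 : (4 : ℝ) ≤ 2 ^ (r - 1) := by
      calc (4 : ℝ) = 2 ^ 2 := by norm_num
        _ ≤ 2 ^ (r - 1) := pow_le_pow_right₀ (by norm_num) (by omega)
    refine inv_pos.2 (Real.logb_pos (by norm_num) ?_)
    rw [lt_div_iff₀ (by linarith)]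
    linarith
  -- For `n ≥ 4 r` the argument `4 r (n - r)` of the logarithm is at most `n ^ 2`.
  refine ⟨K * 2, by positivity, 4 * r, fun n hn => ?_⟩
  refine (precise_bound r hr n (by omega)).trans ?_
  have hnR : 4 * (r : ℝ) ≤ n := by exact_mod_cast hn
  have hrR : (3 : ℝ) ≤ r := by exact_mod_cast hr
  have hlog : Real.logb 2 (4 * (r : ℝ) * ((n : ℝ) - r)) ≤ 2 * Real.logb 2 n := by
    have h2 : 2 * Real.logb 2 (n : ℝ) = Real.logb 2 ((n : ℝ) ^ 2) := by
      rw [Real.logb_pow]; norm_num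
    rw [h2]
    refine Real.logb_le_logb_of_le (by norm_num) (mul_pos (by linarith) (by linarith)) ?_
    nlinarith
  rw [mul_assoc K]
  exact mul_le_mul_of_nonneg_left hlog hKpos.le
end

section
/- Let n = 5 and r = 4. For every single round g on {1,...,5}, the number of 4-element subsets of {1,...,5} whose facets are consistently oriented by g is at most 2. -/
/-- The sign of the facet `S_x \ {y}` of a consistently oriented `S_x = univ \ {x}`, in terms of the
twisted sign `δ = (-1)^x ε`; apart from the case distinction it is symmetric in `x` and `y`. -/
theorem ConsistentOn.exists_twist {g : Finset (Fin 5) → ℤ} {x : Fin 5}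
    (h : ConsistentOn 5 4 g (Finset.univ.erase x)) :
    ∃ δ : ℤ, (δ = 1 ∨ δ = -1) ∧ ∀ y, y ≠ x →
      g ((Finset.univ.erase x).erase y) =
        (if x < y then -δ else δ) * (-1) ^ ((x : ℕ) + (y : ℕ)) := by
  obtain ⟨a, ha, haS, ε, hε, hg⟩ := h
  have hcard : (Finset.univ.erase x).card = 4 := by simp
  -- The increasing enumeration of `univ \ {x}` is unique, hence equal to `x.succAbove`.
  have hax : a = x.succAbove :=
    (Finset.orderEmbOfFin_unique hcard haS ha).trans
      (Finset.orderEmbOfFin_unique hcard (by simp) (Fin.strictMono_succAbove x)).symm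
  subst hax
  refine ⟨(-1) ^ (x : ℕ) * ε, ?_, fun y hy => ?_⟩
  · rcases neg_one_pow_eq_or ℤ (x : ℕ) with h | h <;> rcases hε with rfl | rfl <;> simp [h]
  · obtain ⟨i, rfl⟩ := Fin.exists_succAbove_eq hy
    rw [hg i]
    have hsign : ∀ (x : Fin 5) (i : Fin 4), (-1 : ℤ) ^ (i : ℕ) =
        (if x < x.succAbove i then -(-1) ^ (x : ℕ) else (-1) ^ (x : ℕ)) *
          (-1) ^ ((x : ℕ) + (x.succAbove i : ℕ)) := by decide
    rw [hsign x i]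
    split_ifs <;> ring

theorem exists_eq_univ_erase {S : Finset (Fin 5)} (hS : S.card = 4) :
    ∃ x, S = Finset.univ.erase x := by
  obtain ⟨x, hx⟩ := Finset.card_eq_one.1 (show Sᶜ.card = 1 by simp [Finset.card_compl, hS])
  exact ⟨x, by rw [← compl_compl S, hx]; ext; simp⟩

/-- The twisted signs of two distinct consistently oriented sets are opposite: compare the two
expressions for the sign of their common facet. -/
theorem twist_eq_neg {g : Finset (Fin 5) → ℤ} {x y : Fin 5} (hxy : x ≠ y) {δ δ' : ℤ}
    (hx : ∀ z, z ≠ x → g ((Finset.univ.erase x).erase z) =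
      (if x < z then -δ else δ) * (-1) ^ ((x : ℕ) + (z : ℕ)))
    (hy : ∀ z, z ≠ y → g ((Finset.univ.erase y).erase z) =
      (if y < z then -δ' else δ') * (-1) ^ ((y : ℕ) + (z : ℕ))) : δ = -δ' := by
  have h := hx y hxy.symm
  rw [Finset.erase_right_comm, hy x hxy, add_comm (y : ℕ)] at h
  have h' := mul_right_cancel₀ (pow_ne_zero _ (by norm_num : (-1 : ℤ) ≠ 0)) h
  rcases lt_or_gt_of_ne hxy with hlt | hlt
  · simp only [hlt, hlt.not_gt, if_true, if_false] at h'
    lia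
  · simp only [hlt, hlt.not_gt, if_true, if_false] at h'
    lia

/-- For a single round on a `5`-element vertex set, at most `2` of the five `4`-element
subsets have their facets consistently oriented. -/
theorem round_consistent_at_most_two (g : Finset (Fin 5) → ℤ) (hg : IsRound 5 4 g) :
    {S : Finset (Fin 5) | S.card = 4 ∧ ConsistentOn 5 4 g S}.ncard ≤ 2 := by
  by_contra! hlt
  obtain ⟨S, T, U, ⟨hS, cS⟩, ⟨hT, cT⟩, ⟨hU, cU⟩, hST, hSU, hTU⟩ :=
    (Set.two_lt_ncard_iff (Set.toFinite _)).1 hlt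
  obtain ⟨x, rfl⟩ := exists_eq_univ_erase hS
  obtain ⟨y, rfl⟩ := exists_eq_univ_erase hT
  obtain ⟨z, rfl⟩ := exists_eq_univ_erase hU
  obtain ⟨δ₁, h₁, e₁⟩ := cS.exists_twist
  obtain ⟨δ₂, h₂, e₂⟩ := cT.exists_twist
  obtain ⟨δ₃, h₃, e₃⟩ := cU.exists_twist
  have h12 := twist_eq_neg (by rintro rfl; exact hST rfl) e₁ e₂
  have h13 := twist_eq_neg (by rintro rfl; exact hSU rfl) e₁ e₃
  have h23 := twist_eq_neg (by rintro rfl; exact hTU rfl) e₂ e₃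
  lia
end

section
/- t_4(5) ≥ 3: any family of rounds on {1,...,5} such that every 4-element subset of {1,...,5} has at least one round on which its facets are consistently oriented contains at least 3 rounds. In particular, t_4(5) is strictly greater than the lower bound ⌈log₂(5 - 4 + 2)⌉ = 2. -/
/-- A strictly increasing map `Fin 4 → Fin 5` avoiding `v` is the one skipping `v`. -/
lemma eq_succAbove (v : Fin 5) (a : Fin 4 → Fin 5) (ha : StrictMono a) (hv : ∀ i, a i ≠ v) :
    a = v.succAbove := by
  refine (StrictMono.range_inj ha (Fin.strictMono_succAbove v)).1 ?_
  rw [Fin.range_succAbove]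
  have hsub : Finset.univ.image a ⊆ {v}ᶜ := by
    intro x hx
    obtain ⟨i, -, rfl⟩ := Finset.mem_image.1 hx
    simpa using hv i
  have h := Finset.eq_of_subset_of_card_le hsub (by
    rw [Finset.card_image_of_injective _ ha.injective, Finset.card_compl]; simp)
  simpa using congrArg (fun s : Finset (Fin 5) => (s : Set (Fin 5))) h

/-- The sign that a round consistent on the complement of `v` gives to the facet missing `u`
and `v`, normalised so that it is symmetric in `u` and `v` up to the factor recording the order
of `u` and `v`. -/
lemma consistent_sign {g : Finset (Fin 5) → ℤ} {v : Fin 5}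
    (h : ConsistentOn 5 4 g (Finset.univ.erase v)) :
    ∃ δ : ℤ, (δ = 1 ∨ δ = -1) ∧ ∀ u, u ≠ v → g ((Finset.univ.erase v).erase u) =
      δ * ((if u < v then 1 else -1) * (-1) ^ ((u : ℕ) + (v : ℕ))) := by
  obtain ⟨a, ha, hmem, ε, hε, hg⟩ := h
  obtain rfl := eq_succAbove v a ha fun i => Finset.ne_of_mem_erase (hmem i)
  refine ⟨ε * (-1) ^ (v : ℕ), ?_, fun u hu => ?_⟩
  · rcases hε with rfl | rfl <;> rcases neg_one_pow_eq_or ℤ (v : ℕ) with h | h <;> simp [h]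
  · obtain ⟨i, rfl⟩ := Fin.exists_succAbove_eq hu
    rw [hg i, mul_assoc]
    congr 1
    clear hg ha hmem hu
    revert v i
    decide

/-- Distinct complements on which `g` is consistent have opposite normalised signs: on their
common facet the two formulas differ exactly in the order factor. -/
lemma not_two_same {g : Finset (Fin 5) → ℤ} {u v : Fin 5} (huv : u ≠ v) {δ : ℤ}
    (hδ : δ = 1 ∨ δ = -1)
    (hu : ∀ w, w ≠ u → g ((Finset.univ.erase u).erase w) =
      δ * ((if w < u then 1 else -1) * (-1) ^ ((w : ℕ) + (u : ℕ))))
    (hv : ∀ w, w ≠ v → g ((Finset.univ.erase v).erase w) =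
      δ * ((if w < v then 1 else -1) * (-1) ^ ((w : ℕ) + (v : ℕ)))) : False := by
  have h1 := hu v huv.symm
  have h2 := hv u huv
  rw [Finset.erase_right_comm, h2, add_comm (v : ℕ)] at h1
  rcases neg_one_pow_eq_or ℤ ((u : ℕ) + (v : ℕ)) with h | h <;> rw [h] at h1 <;>
    rcases hδ with rfl | rfl <;> rcases lt_or_gt_of_ne huv with h' | h' <;>
    simp [h', h'.not_gt] at h1

lemma not_three_consistent {g : Finset (Fin 5) → ℤ} {u v w : Fin 5}
    (huv : u ≠ v) (huw : u ≠ w) (hvw : v ≠ w)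
    (hu : ConsistentOn 5 4 g (Finset.univ.erase u))
    (hv : ConsistentOn 5 4 g (Finset.univ.erase v))
    (hw : ConsistentOn 5 4 g (Finset.univ.erase w)) : False := by
  obtain ⟨α, hα, hu⟩ := consistent_sign hu
  obtain ⟨β, hβ, hv⟩ := consistent_sign hv
  obtain ⟨γ, hγ, hw⟩ := consistent_sign hw
  have hcases : α = β ∨ α = γ ∨ β = γ := by omega
  rcases hcases with rfl | rfl | rfl
  · exact not_two_same huv hα hu hv
  · exact not_two_same huw hα hu hw
  · exact not_two_same hvw hβ hv hw

/-- `t_4(5) ≥ 3`: any family of rounds on a `5`-element vertex set such that every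
`4`-element subset has at least one round orienting its facets consistently contains
at least `3` rounds (strictly more than the generic lower bound `⌈log₂ 3⌉ = 2`). -/
theorem t_four_five_ge_three (t : ℕ) (G : Fin t → (Finset (Fin 5) → ℤ))
    (hG : ∀ s, IsRound 5 4 (G s))
    (hcov : ∀ S : Finset (Fin 5), S.card = 4 → ∃ s, ConsistentOn 5 4 (G s) S) :
    3 ≤ t := by
  by_contra! ht
  choose s hs using fun v : Fin 5 => hcov (Finset.univ.erase v) (by simp)
  obtain ⟨r, hr⟩ := Fintype.exists_lt_card_fiber_of_mul_lt_card (n := 2) s (by simp; omega)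
  obtain ⟨u, hu, v, hv, w, hw, huv, huw, hvw⟩ := Finset.two_lt_card.1 hr
  simp only [Finset.mem_filter, Finset.mem_univ, true_and] at hu hv hw
  exact not_three_consistent huv huw hvw (hu ▸ hs u) (hv ▸ hs v) (hw ▸ hs w)
end

section
/- Let n ≥ k ≥ 3 and t ≥ 1 be integers. If there exists a k-independent family of n(n-1)/2 distinct subsets of a t-element set, then there exist t orientations O_1,...,O_t of the edges of K_n such that for every k distinct edges e_1,...,e_k of K_n and every prescribed direction for each e_i, some O_j orients every e_i in its prescribed direction. In particular, for every sequence i_1,...,i_k of k distinct vertices, some O_j orients the cycle i_1 i_2 ... i_k i_1 cyclically, so W(n,k) ≤ t. -/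
/-- `A` is a `k`-independent family of subsets of `Fin t`: for any `k` distinct members
and any choice of each member or its complement, the intersection is nonempty;
equivalently, some element realizes any prescribed membership pattern. -/
def kIndependent (t m k : ℕ) (A : Fin m → Set (Fin t)) : Prop :=
  ∀ idx : Fin k → Fin m, Function.Injective idx →
    ∀ c : Fin k → Bool, ∃ x : Fin t, ∀ i : Fin k, x ∈ A (idx i) ↔ c i = true

/-- Two edges `{i, i+1}` and `{j, j+1}` of a cycle with `i ≠ j` coincide only if `j = i+1` and
`i = j+1`, which forces `k ∣ 2`. -/
lemma cycle_edges_distinct {n k : ℕ} (hk : 3 ≤ k) {v : Fin k → Fin n}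
    (hv : Function.Injective v) {i j : Fin k} (hij : i ≠ j) :
    ({v i, v (cyc i)} : Finset (Fin n)) ≠ {v j, v (cyc j)} := by
  intro h
  have h1 : v i ∈ ({v j, v (cyc j)} : Finset (Fin n)) := by simp [← h]
  have h2 : v j ∈ ({v i, v (cyc i)} : Finset (Fin n)) := by simp [h]
  simp only [Finset.mem_insert, Finset.mem_singleton, hv.eq_iff, hij, hij.symm, false_or] at h1 h2
  have h1' : i.val = (j.val + 1) % k := congrArg Fin.val h1
  have h2' : j.val = (i.val + 1) % k := congrArg Fin.val h2
  have hi := i.isLt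
  have hj := j.isLt
  rcases Nat.lt_or_ge (j.val + 1) k with a | a <;> rcases Nat.lt_or_ge (i.val + 1) k with b | b
  · rw [Nat.mod_eq_of_lt a] at h1'
    rw [Nat.mod_eq_of_lt b] at h2'
    omega
  · rw [show i.val + 1 = k by omega, Nat.mod_self] at h2'
    rw [Nat.mod_eq_of_lt a] at h1'
    omega
  · rw [show j.val + 1 = k by omega, Nat.mod_self] at h1'
    rw [Nat.mod_eq_of_lt b] at h2'
    omega
  · omega

lemma cyc_ne_self {k : ℕ} (hk : 3 ≤ k) (i : Fin k) : i ≠ cyc i := by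
  intro h
  have h' : i.val = (i.val + 1) % k := congrArg Fin.val h
  have hi := i.isLt
  rcases Nat.lt_or_ge (i.val + 1) k with b | b
  · rw [Nat.mod_eq_of_lt b] at h'
    omega
  · rw [show i.val + 1 = k by omega, Nat.mod_self] at h'
    omega

/-- Let `n ≥ k ≥ 3`. If there is a `k`-independent family of `n(n-1)/2` distinct subsets
of a `t`-element set, then there are `t` orientations of `K_n` such that for any `k`
distinct edges with prescribed directions some orientation realizes all the prescriptions;
in particular every `k`-cycle is cyclically oriented in some orientation, so `W(n,k) ≤ t`. -/
theorem W_le_of_kIndependent (n k t : ℕ) (hk : 3 ≤ k) (hn : k ≤ n)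
    (hA : ∃ A : Fin (n * (n - 1) / 2) → Set (Fin t),
      Function.Injective A ∧ kIndependent t (n * (n - 1) / 2) k A) :
    ∃ F : Fin t → (Fin n → Fin n → Prop), (∀ s, IsTournament (F s)) ∧
      (∀ p : Fin k → Fin n × Fin n,
        (∀ i, (p i).1 ≠ (p i).2) →
        (∀ i j : Fin k, i ≠ j →
          ({(p i).1, (p i).2} : Finset (Fin n)) ≠ ({(p j).1, (p j).2} : Finset (Fin n))) →
        ∃ s, ∀ i, F s (p i).1 (p i).2) ∧
      (∀ v : Fin k → Fin n, Function.Injective v → ∃ s, OrientsCyclically (F s) v) := by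
  obtain ⟨A, -, hA⟩ := hA
  have hcard : Fintype.card {e : Finset (Fin n) // e.card = 2} = n * (n - 1) / 2 := by
    rw [Fintype.card_finset_len, Fintype.card_fin, Nat.choose_two_right]
  have φ : {e : Finset (Fin n) // e.card = 2} ≃ Fin (n * (n - 1) / 2) :=
    Fintype.equivFinOfCardEq hcard
  -- The orientation at `s`; on the diagonal, where `{i, j}` is not an edge, it is false.
  let F : Fin t → Fin n → Fin n → Prop := fun s i j =>
    ∃ h : ({i, j} : Finset (Fin n)).card = 2, (s ∈ A (φ ⟨{i, j}, h⟩) ↔ i < j)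
  have hedges : ∀ p : Fin k → Fin n × Fin n,
      (∀ i, (p i).1 ≠ (p i).2) →
      (∀ i j : Fin k, i ≠ j →
        ({(p i).1, (p i).2} : Finset (Fin n)) ≠ ({(p j).1, (p j).2} : Finset (Fin n))) →
      ∃ s, ∀ i, F s (p i).1 (p i).2 := by
    intro p hne hdist
    obtain ⟨s, hs⟩ := hA (fun i => φ ⟨{(p i).1, (p i).2}, Finset.card_pair (hne i)⟩)
      (by
        intro i j hij
        by_contra hcon
        exact hdist i j hcon (congrArg Subtype.val (φ.injective hij)))
      (fun i => decide ((p i).1 < (p i).2))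
    exact ⟨s, fun i => ⟨Finset.card_pair (hne i), by simpa using hs i⟩⟩
  refine ⟨F, ?_, hedges, ?_⟩
  · intro s i j hij
    have hF : F s i j ↔ (s ∈ A (φ ⟨{i, j}, Finset.card_pair hij⟩) ↔ i < j) :=
      ⟨fun h => h.2, fun h => ⟨Finset.card_pair hij, h⟩⟩
    have hpair : (⟨{j, i}, Finset.card_pair hij.symm⟩ : {e : Finset (Fin n) // e.card = 2}) =
        ⟨{i, j}, Finset.card_pair hij⟩ := Subtype.ext (Finset.pair_comm j i)
    have hF' : F s j i ↔ (s ∈ A (φ ⟨{i, j}, Finset.card_pair hij⟩) ↔ j < i) := by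
      rw [← hpair]
      exact ⟨fun h => h.2, fun h => ⟨Finset.card_pair hij.symm, h⟩⟩
    have hlt : j < i ↔ ¬ i < j := by
      rw [not_lt]
      exact ⟨le_of_lt, fun h => lt_of_le_of_ne h hij.symm⟩
    rw [hF, hF', hlt]
    generalize (s ∈ A (φ ⟨{i, j}, Finset.card_pair hij⟩)) = P
    by_cases hP : P <;> by_cases hQ : i < j <;> simp [Xor', hP, hQ]
  · intro v hv
    exact hedges (fun i => (v i, v (cyc i))) (fun i h => cyc_ne_self hk i (hv h))
      (fun i j hij => cycle_edges_distinct hk hv hij)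
end

section
/- Let n ≥ 2k ≥ 6 and suppose O_1,...,O_t is a family of orientations of K_n such that for every sequence i_1,...,i_k of k distinct vertices some O_j orients the cycle i_1 i_2 ... i_k i_1 cyclically in one or the other direction. Then there exists a ⌊k/2⌋-independent family of ⌊n/2⌋ distinct subsets of a 2t-element set. In particular, T(⌊n/2⌋, ⌊k/2⌋) ≤ 2·W(n,k). -/
/-- The set attached to an ordered pair `(a, b)` of vertices: the ground set is identified with
`Fin 2 × Fin t`, and `(d, s)` belongs to the set when `F s a b` holds if `d = 0`, and when it fails
if `d = 1`. -/
def arcSet {n t : ℕ} (F : Fin t → (Fin n → Fin n → Prop)) (a b : Fin n) : Set (Fin (2 * t)) :=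
  {x | F (finProdFinEquiv.symm x).2 a b ↔ (finProdFinEquiv.symm x).1 = 0}

theorem mem_arcSet {n t : ℕ} (F : Fin t → (Fin n → Fin n → Prop)) (a b : Fin n)
    (d : Fin 2) (s : Fin t) :
    finProdFinEquiv (d, s) ∈ arcSet F a b ↔ (F s a b ↔ d = 0) := by
  simp only [arcSet, Set.mem_ofPred_eq, Equiv.symm_apply_apply]

theorem IsTournament.not_iff {n : ℕ} {O : Fin n → Fin n → Prop} (h : IsTournament O)
    {a b : Fin n} (hab : a ≠ b) : O b a ↔ ¬ O a b := by
  have := xor_def.1 (h a b hab)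
  tauto

/-- Any two distinct indices extend to `k` distinct indices, and a pattern that separates the two
gives an element lying in exactly one of the two members. -/
theorem kIndependent.injective {t m k : ℕ} {A : Fin m → Set (Fin t)} (h : kIndependent t m k A)
    (hk : 2 ≤ k) (hkm : k ≤ m) : Function.Injective A := by
  intro i j hij
  by_contra hne
  let z : Fin m := ⟨0, by omega⟩
  let o : Fin m := ⟨1, by omega⟩
  have hzo : z ≠ o := by simp [z, o, Fin.ext_iff]
  let σ : Equiv.Perm (Fin m) := Equiv.swap z i
  let τ : Equiv.Perm (Fin m) := Equiv.swap (σ o) j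
  have hσz : σ z = i := Equiv.swap_apply_left _ _
  have hτz : τ (σ z) = i := by
    rw [hσz]
    apply Equiv.swap_apply_of_ne_of_ne _ hne
    rw [← hσz]
    exact fun e => hzo (σ.injective e)
  have hτo : τ (σ o) = j := Equiv.swap_apply_left _ _
  obtain ⟨x, hx⟩ := h (fun p => τ (σ (Fin.castLE hkm p)))
    (fun p q hpq => Fin.castLE_injective hkm (σ.injective (τ.injective hpq)))
    (fun p => decide (p.val = 0))
  have h0 : x ∈ A i := by
    have := hx ⟨0, by omega⟩
    rw [show Fin.castLE hkm ⟨0, by omega⟩ = z from rfl, hτz] at this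
    simpa using this
  have h1 : x ∉ A j := by
    have := hx ⟨1, by omega⟩
    rw [show Fin.castLE hkm ⟨1, by omega⟩ = o from rfl, hτo] at this
    simpa using this
  exact h1 (hij ▸ h0)

theorem pairSet_kIndependent (n k t : ℕ) (hk : 3 ≤ k) (hn : 2 * k ≤ n)
    (F : Fin t → (Fin n → Fin n → Prop)) (hT : ∀ s, IsTournament (F s))
    (hcov : ∀ v : Fin k → Fin n, Function.Injective v →
      ∃ s, (∀ i : Fin k, F s (v i) (v (cyc i))) ∨ (∀ i : Fin k, F s (v (cyc i)) (v i))) :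
    kIndependent (2 * t) (n / 2) (k / 2)
      (fun i => arcSet F ⟨2 * i.val, by omega⟩ ⟨2 * i.val + 1, by omega⟩) := by
  intro idx hidx c
  -- A pair that is not used supplies the extra vertex needed when `k` is odd.
  obtain ⟨m, hm⟩ : ∃ m, m ∉ Set.range idx := by
    by_contra hcon
    push Not at hcon
    have := Fintype.card_le_of_surjective idx hcon
    simp only [Fintype.card_fin] at this
    omega
  have hm' : ∀ j, idx j ≠ m := fun j e => hm ⟨j, e⟩
  let g : ℕ → Fin (n / 2) := fun j => if h : j < k / 2 then idx ⟨j, h⟩ else m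
  let r : ℕ → ℕ := fun j => if h : j < k / 2 then (if c ⟨j, h⟩ then 0 else 1) else 0
  have hg : ∀ a b, a ≤ k / 2 → b ≤ k / 2 → g a = g b → a = b := by
    intro a b ha hb hab
    simp only [g] at hab
    split_ifs at hab with h1 h2 h2
    · simpa using hidx hab
    · exact absurd hab (hm' _)
    · exact absurd hab.symm (hm' _)
    · omega
  let v : Fin k → Fin n := fun p =>
    ⟨2 * (g (p.val / 2)).val + (p.val + r (p.val / 2)) % 2, by
      have := (g (p.val / 2)).isLt
      omega⟩
  have hv : Function.Injective v := by
    intro p q hpq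
    simp only [v, Fin.mk.injEq] at hpq
    have h1 : p.val / 2 = q.val / 2 := by
      apply hg _ _ (by omega) (by omega)
      apply Fin.ext
      omega
    rw [h1] at hpq
    apply Fin.ext
    omega
  obtain ⟨s, hs⟩ := hcov v hv
  have key : ∀ j : Fin (k / 2), ∃ p : Fin k,
      v p = ⟨2 * (idx j).val + (if c j then 0 else 1), by split_ifs <;> omega⟩ ∧
      v (cyc p) = ⟨2 * (idx j).val + (if c j then 1 else 0), by split_ifs <;> omega⟩ := by
    rintro ⟨j, hj⟩
    refine ⟨⟨2 * j, by omega⟩, ?_, ?_⟩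
    · apply Fin.ext
      have e : 2 * j / 2 = j := by omega
      simp only [v, e, g, r, hj, dite_true]
      split_ifs <;> omega
    · apply Fin.ext
      have e0 : (2 * j + 1) % k = 2 * j + 1 := Nat.mod_eq_of_lt (by omega)
      have e : (2 * j + 1) / 2 = j := by omega
      simp only [v, cyc, e0, e, g, r, hj, dite_true]
      split_ifs <;> omega
  have hne : ∀ j : Fin (k / 2), (⟨2 * (idx j).val, by omega⟩ : Fin n) ≠
      ⟨2 * (idx j).val + 1, by omega⟩ := by
    intro j e
    simp at e
  rcases hs with hs | hs
  · refine ⟨finProdFinEquiv (0, s), fun j => ?_⟩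
    rw [mem_arcSet]
    obtain ⟨p, hp, hp'⟩ := key j
    have h := hs p
    rw [hp, hp'] at h
    cases hc : c j
    · simp only [hc] at h
      simpa using ((hT s).not_iff (hne j)).1 h
    · simp only [hc] at h
      simpa using h
  · refine ⟨finProdFinEquiv (1, s), fun j => ?_⟩
    rw [mem_arcSet]
    obtain ⟨p, hp, hp'⟩ := key j
    have h := hs p
    rw [hp, hp'] at h
    cases hc : c j
    · simp only [hc] at h
      simpa using h
    · simp only [hc] at h
      simpa using ((hT s).not_iff (hne j)).1 h

/-- The case `k = 3`, proved with `⌊n/2⌋` of the sets attached to the arcs from vertex `0`. -/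
theorem starSet_of_triangle_covering (n t : ℕ) (hn : 6 ≤ n)
    (F : Fin t → (Fin n → Fin n → Prop)) (hT : ∀ s, IsTournament (F s))
    (hcov : ∀ v : Fin 3 → Fin n, Function.Injective v →
      ∃ s, (∀ i : Fin 3, F s (v i) (v (cyc i))) ∨ (∀ i : Fin 3, F s (v (cyc i)) (v i))) :
    ∃ A : Fin (n / 2) → Set (Fin (2 * t)),
      Function.Injective A ∧ kIndependent (2 * t) (n / 2) 1 A := by
  have hcov' : ∀ a b c : Fin n, a ≠ b → a ≠ c → b ≠ c →
      ∃ s, (F s a b ∧ F s c a) ∨ (F s b a ∧ F s a c) := by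
    intro a b c hab hac hbc
    have hinj : Function.Injective ![a, b, c] := by
      intro p q hpq
      fin_cases p <;> fin_cases q <;> simp_all
    obtain ⟨s, hs | hs⟩ := hcov ![a, b, c] hinj
    · exact ⟨s, Or.inl ⟨hs 0, hs 2⟩⟩
    · exact ⟨s, Or.inr ⟨hs 0, hs 2⟩⟩
  let z : Fin n := ⟨0, by omega⟩
  refine ⟨fun i => arcSet F z ⟨i.val + 1, by omega⟩, ?_, ?_⟩
  · intro i j hij
    by_contra hne
    have hzi : z ≠ ⟨i.val + 1, by omega⟩ := by simp [z]
    have hzj : z ≠ ⟨j.val + 1, by omega⟩ := by simp [z]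
    obtain ⟨s, hs⟩ := hcov' z ⟨i.val + 1, by omega⟩ ⟨j.val + 1, by omega⟩ hzi hzj
      (fun e => hne (by simpa [Fin.ext_iff] using e))
    have hmem := Set.ext_iff.1 hij (finProdFinEquiv (0, s))
    simp only [mem_arcSet, iff_true] at hmem
    rw [(hT s).not_iff hzi, (hT s).not_iff hzj] at hs
    tauto
  · intro idx _ c
    obtain ⟨s, -⟩ := hcov' z ⟨1, by omega⟩ ⟨2, by omega⟩ (by simp [z]) (by simp [z]) (by simp)
    by_cases h : F s z ⟨(idx 0).val + 1, by omega⟩ ↔ c 0 = true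
    · refine ⟨finProdFinEquiv (0, s), fun i => ?_⟩
      rw [Subsingleton.elim i 0, mem_arcSet]
      simpa using h
    · refine ⟨finProdFinEquiv (1, s), fun i => ?_⟩
      rw [Subsingleton.elim i 0, mem_arcSet]
      simp only [one_ne_zero, iff_false]
      tauto

/-- Let `n ≥ 2k ≥ 6` and let `O_1, …, O_t` be orientations of `K_n` such that every
sequence of `k` distinct vertices has its cycle cyclically oriented, in one or the other
direction, by some `O_j`. Then there is a `⌊k/2⌋`-independent family of `⌊n/2⌋` distinct
subsets of a `2t`-element set; in particular `T(⌊n/2⌋, ⌊k/2⌋) ≤ 2·W(n,k)`. -/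
theorem kIndependent_of_cycle_covering (n k t : ℕ) (hk : 3 ≤ k) (hn : 2 * k ≤ n)
    (F : Fin t → (Fin n → Fin n → Prop)) (hT : ∀ s, IsTournament (F s))
    (hcov : ∀ v : Fin k → Fin n, Function.Injective v →
      ∃ s, (∀ i : Fin k, F s (v i) (v (cyc i))) ∨ (∀ i : Fin k, F s (v (cyc i)) (v i))) :
    ∃ A : Fin (n / 2) → Set (Fin (2 * t)),
      Function.Injective A ∧ kIndependent (2 * t) (n / 2) (k / 2) A := by
  rcases hk.eq_or_lt with rfl | hk4
  · exact starSet_of_triangle_covering n t hn F hT hcov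
  · have hind := pairSet_kIndependent n k t hk hn F hT hcov
    exact ⟨_, hind.injective (by omega) (by omega), hind⟩
end

section
/- Let k ≥ 3, r ≥ 1 and n = 2^r(k-2) + 1. For distinct a, b ∈ {0,...,n-1} let d(a,b) = b - a - 1 if b > a and d(a,b) = n + b - a - 1 if a > b, let f(a,b) = ⌊d(a,b)/(k-2)⌋, and let f_ℓ(a,b) denote the ℓ-th binary digit of f(a,b) for 0 ≤ ℓ < r. Define r orientations O_0,...,O_{r-1} of K_n by letting O_ℓ orient the edge {i,j} from i to j exactly when f_ℓ(i,j) = 0. Then for every choice of k vertices u_1 < u_2 < ... < u_k there exists ℓ ∈ {0,...,r-1} such that O_ℓ orients the cycle u_1 u_2 ... u_k u_1 cyclically, i.e., f_ℓ(u_i, u_{i+1}) = 0 for all i = 1,...,k (indices mod k). -/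
lemma sum_testBit_range_eq_mod (x r : ℕ) :
    ∑ l ∈ Finset.range r, (if x.testBit l then 2 ^ l else 0) = x % 2 ^ r := by
  induction r with
  | zero => simp [Nat.mod_one]
  | succ r ih =>
    rw [Finset.sum_range_succ, ih, Nat.mod_pow_succ, ← Nat.toNat_testBit]
    cases x.testBit r <;> simp

lemma exists_common_zero_digit {ι : Type*} [Fintype ι] (g : ι → ℕ) (r : ℕ)
    (h : ∑ i, g i < 2 ^ r - 1) : ∃ l < r, ∀ i, (g i).testBit l = false := by
  by_contra! hc
  refine absurd h (not_lt.mpr ?_)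
  calc 2 ^ r - 1 = ∑ l ∈ Finset.range r, 2 ^ l := by
        rw [Nat.geomSum_eq le_rfl]; simp
    _ ≤ ∑ l ∈ Finset.range r, ∑ i, (if (g i).testBit l then 2 ^ l else 0) := by
        refine Finset.sum_le_sum fun l hl => ?_
        obtain ⟨i, hi⟩ := hc l (Finset.mem_range.mp hl)
        have := Finset.single_le_sum
          (f := fun i => if (g i).testBit l then 2 ^ l else 0)
          (fun _ _ => Nat.zero_le _) (Finset.mem_univ i)
        simpa [hi] using this
    _ = ∑ i, g i % 2 ^ r := by
        rw [Finset.sum_comm]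
        exact Finset.sum_congr rfl fun i _ => sum_testBit_range_eq_mod _ _
    _ ≤ ∑ i, g i := Finset.sum_le_sum fun i _ => Nat.mod_le _ _

lemma sum_cycDist {n q : ℕ} (u : Fin (q + 1) → Fin n) (hu : StrictMono u) :
    ∑ i, cycDist n (u i) (u (cyc i)) + (q + 1) = n := by
  have hcast (i : Fin q) : cyc i.castSucc = i.succ := by
    ext; simp [cyc]
  have hlast : cyc (Fin.last q) = 0 := by
    ext; simp [cyc]
  have hstep (i : Fin q) : cycDist n (u i.castSucc) (u i.succ) + 1 + (u i.castSucc : ℕ)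
      = u i.succ := by
    have : (u i.castSucc : ℕ) < u i.succ := hu Fin.castSucc_lt_succ
    simp only [cycDist, if_pos this]
    omega
  -- The arc that closes the cycle is the only one crossing from `n - 1` to `0`.
  have hclose : cycDist n (u (Fin.last q)) (u 0) + 1 + (u (Fin.last q) : ℕ) = u 0 + n := by
    have : ¬ (u (Fin.last q) : ℕ) < u 0 := not_lt.mpr (hu.monotone (Fin.zero_le _))
    have := (u (Fin.last q)).isLt
    simp only [cycDist, if_neg ‹¬ _›]
    omega
  have hsum := Finset.sum_congr (rfl : (Finset.univ : Finset (Fin q)) = _) fun i _ => hstep i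
  simp only [Finset.sum_add_distrib, Finset.sum_const, Finset.card_univ, Fintype.card_fin,
    smul_eq_mul, mul_one] at hsum
  -- Both sums run over the same vertices, which makes the successive differences telescope.
  have htel := (Fin.sum_univ_castSucc fun i => (u i : ℕ)).symm.trans
    (Fin.sum_univ_succ fun i => (u i : ℕ))
  rw [Fin.sum_univ_castSucc]
  simp only [hcast, hlast]
  omega

/-- Let `k ≥ 3`, `r ≥ 1`, `n = 2^r (k-2) + 1`, and define the orientation `O_ℓ`
(for `0 ≤ ℓ < r`) to orient the edge `{i,j}` from `i` to `j` exactly when the `ℓ`-th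
binary digit of `f(i,j)` is `0`. Then for every choice of `k` vertices
`u_1 < u_2 < ⋯ < u_k` there is an `ℓ < r` such that `O_ℓ` orients the cycle
`u_1 u_2 ⋯ u_k u_1` cyclically, i.e. `f_ℓ(u_i, u_{i+1}) = 0` for all `i` (indices
mod `k`). -/
theorem construction_orients_increasing_cycles (k r n : ℕ) (hk : 3 ≤ k) (hr : 1 ≤ r)
    (hn : n = 2 ^ r * (k - 2) + 1) (u : Fin k → Fin n) (hu : StrictMono u) :
    ∃ ℓ : ℕ, ℓ < r ∧ ∀ i : Fin k, Nat.testBit (fval n k (u i) (u (cyc i))) ℓ = false := by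
  apply exists_common_zero_digit
  obtain ⟨q, rfl⟩ : ∃ q, k = q + 1 := ⟨k - 1, by omega⟩
  have hd := sum_cycDist u hu
  have hf : (∑ i, fval n (q + 1) (u i) (u (cyc i))) * (q + 1 - 2)
      ≤ ∑ i, cycDist n (u i) (u (cyc i)) := by
    rw [Finset.sum_mul]
    exact Finset.sum_le_sum fun i _ => Nat.div_mul_le_self _ _
  refine lt_of_mul_lt_mul_right (a := q + 1 - 2) ?_ (Nat.zero_le _)
  rw [Nat.sub_mul]
  omega
end
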